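/- Let 1<p<∞ and let Ω ⊆ ℝ^N be an open set with E_p(Ω) < +∞. Suppose there exists k ∈ ℕ\{0} with λ_{k,p}^{LS}(Ω) < E_p(Ω). Let V ≥ 0 be a strongly confining potential, {ε_n} a decreasing infinitesimal sequence of positive numbers, V_n := ε_n V, and let u_{ℓ,n} ∈ S_p(Ω) ∩ W^{1,p}_0(Ω;V) be constrained critical points of G_n(φ) = ∫_Ω |∇φ|^p dx + ∫_Ω V_n |φ|^p dx at the levels λ_{ℓ,p}^{LS}(Ω;V_n). Then for every ℓ ∈ {1,…,k} there exist an index n_ℓ ∈ ℕ and two positive constants C_ℓ and α_ℓ, both independent of n, such that |u_{ℓ,n}(x)| ≤ C_ℓ e^{−α_ℓ |x|} for a.e. x ∈ Ω and for every n ≥ n_ℓ. -/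

import Mathlib

open MeasureTheory Filter Topology Metric Set ENNReal
open scoped RealInnerProductSpace

noncomputable section

/-- Euclidean space `ℝ^N`. -/
abbrev EucN (N : ℕ) := EuclideanSpace ℝ (Fin N)

/-- A test function on an open set `Ω ⊆ ℝ^N`: smooth, with compact support contained in `Ω`. -/
def IsTestFun {N : ℕ} (Ω : Set (EucN N)) (φ : EucN N → ℝ) : Prop :=
  ContDiff ℝ (⊤ : ℕ∞) φ ∧ HasCompactSupport φ ∧ tsupport φ ⊆ Ω

/-- Pairs `(u, g)` in `L^q × L^q`, thought of as a function together with its (weak) gradient. -/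
abbrev SobPair (N : ℕ) (q : ℝ≥0∞) :=
  Lp ℝ q (volume : Measure (EucN N)) × Lp (EucN N) q (volume : Measure (EucN N))

/-- A pair given (a.e.) by a test function and its gradient. -/
def IsTestPair {N : ℕ} (q : ℝ≥0∞) (Ω : Set (EucN N)) (w : SobPair N q) : Prop :=
  ∃ ψ : EucN N → ℝ, IsTestFun Ω ψ ∧ (⇑w.1 =ᵐ[volume] ψ) ∧
    (⇑w.2 =ᵐ[volume] fun x => gradient ψ x)

theorem fact_one_le_ofReal {p : ℝ} (hp : 1 ≤ p) : Fact (1 ≤ ENNReal.ofReal p) :=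
  ⟨ENNReal.one_le_ofReal.mpr hp⟩

/-- The Sobolev space `W^{1,p}_0(Ω)`, realized as the closure in `L^p × L^p` of the set of
pairs (test function, its gradient). -/
def W10 (N : ℕ) (p : ℝ) (hp : 1 ≤ p) (Ω : Set (EucN N)) :
    Set (SobPair N (ENNReal.ofReal p)) :=
  letI := fact_one_le_ofReal hp
  closure {w | IsTestPair (ENNReal.ofReal p) Ω w}

/-- The first eigenvalue `λ_{1,p}(Ω)` (as an extended real, `∞` if there are no admissible
functions). -/
def lambda1p (N : ℕ) (p : ℝ) (hp : 1 ≤ p) (Ω : Set (EucN N)) : ℝ≥0∞ :=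
  sInf {t | ∃ w ∈ W10 N p hp Ω, (∫ x, |w.1 x| ^ p) = 1 ∧
    t = ENNReal.ofReal (∫ x, ‖w.2 x‖ ^ p)}

/-- The `L^p` Poincaré constant "at infinity" `E_p(Ω)`. -/
def Einfty (N : ℕ) (p : ℝ) (hp : 1 ≤ p) (Ω : Set (EucN N)) : ℝ≥0∞ :=
  ⨆ R ∈ Set.Ioi (0 : ℝ), lambda1p N p hp (Ω \ closure (ball (0 : EucN N) R))

/-- There is a continuous odd map from `A` to the unit sphere `S^{j-1} ⊆ ℝ^j`. -/
def HasOddMapToSphere {Z : Type*} [NormedAddCommGroup Z] (A : Set Z) (j : ℕ) : Prop :=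
  ∃ f : Z → EuclideanSpace ℝ (Fin j),
    ContinuousOn f A ∧ (∀ x ∈ A, ‖f x‖ = 1) ∧ ∀ x ∈ A, f (-x) = -f x

/-- The Krasnosel'skii genus of `A` is at least `k`. -/
def genusGE {Z : Type*} [NormedAddCommGroup Z] (A : Set Z) (k : ℕ) : Prop :=
  ∀ j : ℕ, HasOddMapToSphere A j → k ≤ j

/-- The Krasnosel'skii genus of `A`, valued in `ℕ∞`. -/
def genus {Z : Type*} [NormedAddCommGroup Z] (A : Set Z) : ℕ∞ :=
  sInf {k : ℕ∞ | ∃ j : ℕ, (j : ℕ∞) = k ∧ HasOddMapToSphere A j}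

/-- The class `𝒲_{k,p}(Ω)` of compact symmetric subsets of `S_p(Ω) ∩ W^{1,p}_0(Ω)` with
genus at least `k`. -/
def SobClass (N : ℕ) (p : ℝ) (hp : 1 ≤ p) (Ω : Set (EucN N)) (k : ℕ) :
    Set (Set (SobPair N (ENNReal.ofReal p))) :=
  letI := fact_one_le_ofReal hp
  {K | K ⊆ W10 N p hp Ω ∧ (∀ w ∈ K, (∫ x, |w.1 x| ^ p) = 1) ∧
       (∀ w ∈ K, -w ∈ K) ∧ IsCompact K ∧ genusGE K k}

/-- The `k`-th minmax Ljusternik–Schnirelmann value `λ_{k,p}^{LS}(Ω)`. -/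
def lambdaLS (N : ℕ) (p : ℝ) (hp : 1 ≤ p) (Ω : Set (EucN N)) (k : ℕ) : ℝ≥0∞ :=
  ⨅ K ∈ SobClass N p hp Ω k, ⨆ w ∈ K, ENNReal.ofReal (∫ x, ‖w.2 x‖ ^ p)

/-- `w = (u, ∇u)` is an eigenfunction of the Dirichlet `p`-Laplacian on `Ω` associated to the
eigenvalue `lam`. -/
def IsEigenfunction (N : ℕ) (p : ℝ) (hp : 1 ≤ p) (Ω : Set (EucN N)) (lam : ℝ)
    (w : SobPair N (ENNReal.ofReal p)) : Prop :=
  w ∈ W10 N p hp Ω ∧ w ≠ 0 ∧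
  ∀ φ : EucN N → ℝ, IsTestFun Ω φ →
    (∫ x, ‖w.2 x‖ ^ (p - 2) * ⟪w.2 x, gradient φ x⟫) =
      lam * ∫ x, |w.1 x| ^ (p - 2) * (w.1 x) * φ x

/-- `lam` is an eigenvalue of the Dirichlet `p`-Laplacian on `Ω`. -/
def IsEigenvalue (N : ℕ) (p : ℝ) (hp : 1 ≤ p) (Ω : Set (EucN N)) (lam : ℝ) : Prop :=
  ∃ w, IsEigenfunction N p hp Ω lam w

/-- `v = (v, ∇v)` is a non-negative weak subsolution of `-Δ_p u = lam · u^{p-1}` in `Ω`. -/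
def IsSubsolution (N : ℕ) (p : ℝ) (hp : 1 ≤ p) (Ω : Set (EucN N)) (lam : ℝ)
    (v : SobPair N (ENNReal.ofReal p)) : Prop :=
  v ∈ W10 N p hp Ω ∧ (∀ᵐ x, 0 ≤ v.1 x) ∧
  ∀ φ ∈ W10 N p hp Ω, (∀ᵐ x, 0 ≤ φ.1 x) →
    (∫ x, ‖v.2 x‖ ^ (p - 2) * ⟪v.2 x, φ.2 x⟫) ≤ lam * ∫ x, (v.1 x) ^ (p - 1) * φ.1 x

/-- A strongly confining potential. -/
def StronglyConfining (N : ℕ) (V : EucN N → ℝ) : Prop :=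
  LocallyIntegrable V volume ∧ (∀ᵐ x, 0 ≤ V x) ∧
  ∃ α : ℝ → ℝ, (∀ R > (0 : ℝ), 0 < α R) ∧ MonotoneOn α (Set.Ioi 0) ∧
    Tendsto α atTop atTop ∧
    ∀ R > (0 : ℝ), ∀ᵐ x, x ∉ ball (0 : EucN N) R → α R ≤ V x

/-- Triples `(u, g, h)` in `L^q × L^q × L^q`; `h` plays the role of `V^{1/p} u` in the weighted
Sobolev space. -/
abbrev SobTriple (N : ℕ) (q : ℝ≥0∞) :=
  Lp ℝ q (volume : Measure (EucN N)) × Lp (EucN N) q (volume : Measure (EucN N)) ×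
    Lp ℝ q (volume : Measure (EucN N))

/-- A triple given (a.e.) by a test function, its gradient, and `V^{1/p}` times it. -/
def IsTestTriple {N : ℕ} (q : ℝ≥0∞) (p : ℝ) (Ω : Set (EucN N)) (V : EucN N → ℝ)
    (w : SobTriple N q) : Prop :=
  ∃ ψ : EucN N → ℝ, IsTestFun Ω ψ ∧ (⇑w.1 =ᵐ[volume] ψ) ∧
    (⇑w.2.1 =ᵐ[volume] fun x => gradient ψ x) ∧
    (⇑w.2.2 =ᵐ[volume] fun x => (V x) ^ (1/p) * ψ x)

/-- The weighted Sobolev space `W^{1,p}_0(Ω; V)`, realized as a closure of triples coming from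
test functions; the norm topology of `L^p × L^p × L^p` on such triples corresponds exactly to
the weighted Sobolev norm `(∫|∇u|^p + ∫(1+V)|u|^p)^{1/p}`. -/
def W10V (N : ℕ) (p : ℝ) (hp : 1 ≤ p) (Ω : Set (EucN N)) (V : EucN N → ℝ) :
    Set (SobTriple N (ENNReal.ofReal p)) :=
  letI := fact_one_le_ofReal hp
  closure {w | IsTestTriple (ENNReal.ofReal p) p Ω V w}

/-- The class `𝒲_{k,p}(Ω; V)` for the weighted space. -/
def SobClassV (N : ℕ) (p : ℝ) (hp : 1 ≤ p) (Ω : Set (EucN N)) (V : EucN N → ℝ) (k : ℕ) :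
    Set (Set (SobTriple N (ENNReal.ofReal p))) :=
  letI := fact_one_le_ofReal hp
  {K | K ⊆ W10V N p hp Ω V ∧ (∀ w ∈ K, (∫ x, |w.1 x| ^ p) = 1) ∧
       (∀ w ∈ K, -w ∈ K) ∧ IsCompact K ∧ genusGE K k}

/-- The perturbed minmax value `λ_{k,p}^{LS}(Ω; ε V)`, for the functional
`G(φ) = ∫|∇φ|^p + ε ∫ V |φ|^p`. -/
def lambdaLSV (N : ℕ) (p : ℝ) (hp : 1 ≤ p) (Ω : Set (EucN N)) (V : EucN N → ℝ)
    (ε : ℝ) (k : ℕ) : ℝ≥0∞ :=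
  ⨅ K ∈ SobClassV N p hp Ω V k, ⨆ w ∈ K,
    ENNReal.ofReal ((∫ x, ‖w.2.1 x‖ ^ p) + ε * ∫ x, |w.2.2 x| ^ p)

/-- `w` is a constrained critical point, at level `lam`, of the perturbed functional
`G(φ) = ∫|∇φ|^p + ε ∫ V |φ|^p` on the unit sphere of `L^p`. -/
def IsCriticalV (N : ℕ) (p : ℝ) (hp : 1 ≤ p) (Ω : Set (EucN N)) (V : EucN N → ℝ)
    (ε : ℝ) (lam : ℝ) (w : SobTriple N (ENNReal.ofReal p)) : Prop :=
  w ∈ W10V N p hp Ω V ∧ (∫ x, |w.1 x| ^ p) = 1 ∧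
  ∀ φ : EucN N → ℝ, IsTestFun Ω φ →
    (∫ x, ‖w.2.1 x‖ ^ (p - 2) * ⟪w.2.1 x, gradient φ x⟫)
      + ε * ∫ x, V x * |w.1 x| ^ (p - 2) * (w.1 x) * φ x
    = lam * ∫ x, |w.1 x| ^ (p - 2) * (w.1 x) * φ x

/-- The embedding `W^{1,p}_0(Ω) ↪ L^p(Ω)` is compact: every bounded sequence in `W^{1,p}_0(Ω)`
has a subsequence converging strongly in `L^p`. -/
def CompactSobolevEmbedding (N : ℕ) (p : ℝ) (hp : 1 ≤ p) (Ω : Set (EucN N)) : Prop :=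
  ∀ w : ℕ → SobPair N (ENNReal.ofReal p), (∀ n, w n ∈ W10 N p hp Ω) →
    (∃ M : ℝ≥0∞, M ≠ ⊤ ∧ ∀ n, eLpNorm (⇑(w n).1) (ENNReal.ofReal p) volume ≤ M ∧
        eLpNorm (⇑(w n).2) (ENNReal.ofReal p) volume ≤ M) →
    ∃ σ : ℕ → ℕ, StrictMono σ ∧ ∃ u : EucN N → ℝ, MemLp u (ENNReal.ofReal p) volume ∧
      Tendsto (fun n => eLpNorm (⇑(w (σ n)).1 - u) (ENNReal.ofReal p) volume) atTop (𝓝 0)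

/-!
Fix `Λ < L` strictly between `λ_k^{LS}(Ω)` and `E_p(Ω)`. An odd regularisation of a nearly optimal
compact set gives its elements finite potential energy, so for small `ε` the levels
`λ_ℓ^{LS}(Ω; ε V)` with `ℓ ≤ k` are at most `Λ`. As `V ≥ 0`, a critical point `u` then satisfies
`-Δ_p u ≤ Λ |u|^{p-2} u` where `u ≥ 0`, and the reverse inequality where `u ≤ 0`. No other
property of `ε`, `ℓ` and `u` enters, so the constants are independent of them.

Choose `R` such that the Poincaré constant of `Ω` outside the ball of radius `R` is at least `L`.
Testing the equation with `u` times a radial cutoff and comparing with this Poincaré inequality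
bounds the `L^p` mass of `u` outside a ball by its mass in an annulus of unit width. Filling the
hole, the exterior mass decreases by a fixed factor whenever the radius grows by one, hence
exponentially. De Giorgi's iteration, which uses truncations of `u` at increasing levels on
shrinking exterior domains, turns the decay of the mass into pointwise decay.
-/

section LpTools

variable {α E F G : Type*} [MeasurableSpace α] {μ : Measure α} [NormedAddCommGroup E]
  [NormedAddCommGroup F] [NormedAddCommGroup G]

lemma integrable_norm_rpow_of_memLp {p : ℝ} (hp : 0 < p) {f : α → E}
    (hf : MemLp f (ENNReal.ofReal p) μ) : Integrable (fun x => ‖f x‖ ^ p) μ := by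
  simpa only [ENNReal.toReal_ofReal hp.le] using
    hf.integrable_norm_rpow (ENNReal.ofReal_pos.2 hp).ne' ENNReal.ofReal_ne_top

lemma eLpNorm_ofReal_eq_integral {p : ℝ} (hp : 0 < p) {f : α → E}
    (hf : MemLp f (ENNReal.ofReal p) μ) :
    eLpNorm f (ENNReal.ofReal p) μ = ENNReal.ofReal ((∫ x, ‖f x‖ ^ p ∂μ) ^ (1 / p)) := by
  rw [hf.eLpNorm_eq_integral_rpow_norm (ENNReal.ofReal_pos.2 hp).ne' ENNReal.ofReal_ne_top,
    ENNReal.toReal_ofReal hp.le, one_div]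

lemma integral_norm_rpow_eq_norm_Lp_rpow {p : ℝ} (hp : 0 < p) (f : Lp E (ENNReal.ofReal p) μ) :
    ∫ x, ‖f x‖ ^ p ∂μ = ‖f‖ ^ p := by
  have hI : 0 ≤ ∫ x, ‖f x‖ ^ p ∂μ := integral_nonneg fun x => by positivity
  rw [Lp.norm_def, eLpNorm_ofReal_eq_integral hp (Lp.memLp f),
    ENNReal.toReal_ofReal (by positivity), ← Real.rpow_mul hI, one_div_mul_cancel hp.ne',
    Real.rpow_one]

lemma tendsto_eLpNorm_zero_of_dominated {q : ℝ≥0∞} (hq0 : q ≠ 0) (hq : q ≠ ∞) {f : ℕ → α → E}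
    {g : α → F} (hf : ∀ n, AEStronglyMeasurable (f n) μ) (hg : MemLp g q μ)
    (hfg : ∀ n, ∀ᵐ x ∂μ, ‖f n x‖ ≤ ‖g x‖)
    (hlim : ∀ᵐ x ∂μ, Tendsto (fun n => f n x) atTop (𝓝 0)) :
    Tendsto (fun n => eLpNorm (f n) q μ) atTop (𝓝 0) := by
  have hpos : 0 < q.toReal := ENNReal.toReal_pos hq0 hq
  have hpow : ∀ {s : ℝ}, 0 < s → Tendsto (fun t : ℝ≥0∞ => t ^ s) (𝓝 0) (𝓝 0) := fun {s} hs => by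
    simpa only [ENNReal.zero_rpow_of_pos hs] using
      (ENNReal.continuous_rpow_const (y := s)).tendsto (0 : ℝ≥0∞)
  have hint : Tendsto (fun n => ∫⁻ x, ‖f n x‖ₑ ^ q.toReal ∂μ) atTop (𝓝 (∫⁻ _, 0 ∂μ)) := by
    refine tendsto_lintegral_of_dominated_convergence' (fun x => ‖g x‖ₑ ^ q.toReal)
      (fun n => (hf n).enorm.pow_const _) (fun n => ?_)
      (lintegral_rpow_enorm_lt_top_of_eLpNorm_lt_top hq0 hq hg.2).ne ?_
    · filter_upwards [hfg n] with x hx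
      gcongr
      exact enorm_le_iff_norm_le.mpr hx
    · filter_upwards [hlim] with x hx
      exact (hpow hpos).comp (by simpa only [enorm_zero] using hx.enorm)
  simp_rw [eLpNorm_eq_lintegral_rpow_enorm_toReal hq0 hq]
  rw [lintegral_zero] at hint
  exact (hpow (one_div_pos.2 hpos)).comp hint

lemma tendsto_eLpNorm_bilin_sub_bilin [NormedSpace ℝ E] [NormedSpace ℝ F] [NormedSpace ℝ G]
    (B : E →L[ℝ] F →L[ℝ] G) {q : ℝ≥0∞} (hq1 : 1 ≤ q) (hq : q ≠ ∞)
    {a : ℕ → α → E} {b : α → E} {M : ℝ} (ha : ∀ n, AEStronglyMeasurable (a n) μ)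
    (haM : ∀ n x, ‖a n x‖ ≤ M) (hab : ∀ᵐ x ∂μ, Tendsto (fun n => a n x) atTop (𝓝 (b x)))
    {f : ℕ → α → F} {g : α → F} (hf : ∀ n, AEStronglyMeasurable (f n) μ) (hg : MemLp g q μ)
    (hfg : Tendsto (fun n => eLpNorm (f n - g) q μ) atTop (𝓝 0)) :
    Tendsto (fun n => eLpNorm (fun x => B (a n x) (f n x) - B (b x) (g x)) q μ) atTop (𝓝 0) := by
  have hb : AEStronglyMeasurable b μ := aestronglyMeasurable_of_tendsto_ae atTop ha hab
  have hmeas : ∀ {a' : α → E} {f' : α → F}, AEStronglyMeasurable a' μ →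
      AEStronglyMeasurable f' μ → AEStronglyMeasurable (fun x => B (a' x) (f' x)) μ :=
    fun ha' hf' => B.aestronglyMeasurable_comp₂ ha' hf'
  have hvary : Tendsto (fun n => eLpNorm (fun x => B (a n x) ((f n - g) x)) q μ) atTop (𝓝 0) := by
    have hle : ∀ n, eLpNorm (fun x => B (a n x) ((f n - g) x)) q μ ≤
        ENNReal.ofReal (‖B‖ * M) * eLpNorm (f n - g) q μ := fun n =>
      eLpNorm_le_mul_eLpNorm_of_ae_le_mul (Eventually.of_forall fun x =>
        (B.le_opNorm₂ _ _).trans (by gcongr; exact haM n x)) q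
    refine tendsto_of_tendsto_of_tendsto_of_le_of_le tendsto_const_nhds ?_ (fun _ => zero_le) hle
    simpa only [mul_zero] using ENNReal.Tendsto.const_mul hfg (Or.inr ENNReal.ofReal_ne_top)
  have hfix : Tendsto (fun n => eLpNorm (fun x => B (a n x - b x) (g x)) q μ) atTop (𝓝 0) := by
    refine tendsto_eLpNorm_zero_of_dominated (one_pos.trans_le hq1).ne' hq
      (fun n => hmeas ((ha n).sub hb) hg.1) (hg.norm.const_mul (‖B‖ * (M + M))) (fun n => ?_) ?_
    · filter_upwards [hab] with x hx
      have hbM : ‖b x‖ ≤ M := le_of_tendsto' hx.norm fun n => haM n x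
      refine (B.le_opNorm₂ _ _).trans (le_trans ?_ (le_abs_self _))
      gcongr
      exact (norm_sub_le _ _).trans (add_le_add (haM n x) hbM)
    · filter_upwards [hab] with x hx
      have hsub : Tendsto (fun n => a n x - b x) atTop (𝓝 0) := by
        simpa only [sub_self] using hx.sub_const (b x)
      simpa only [map_zero, Function.comp_def, ContinuousLinearMap.flip_apply] using
        ((B.flip (g x)).continuous.tendsto 0).comp hsub
  refine tendsto_of_tendsto_of_tendsto_of_le_of_le tendsto_const_nhds
    (by simpa only [add_zero] using hvary.add hfix) (fun _ => zero_le) fun n => ?_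
  have hsplit : (fun x => B (a n x) (f n x) - B (b x) (g x)) =
      (fun x => B (a n x) ((f n - g) x)) + fun x => B (a n x - b x) (g x) := by
    ext x
    simp only [Pi.sub_apply, Pi.add_apply, map_sub, _root_.sub_apply]
    abel
  rw [hsplit]
  exact eLpNorm_add_le (hmeas (ha n) ((hf n).sub hg.1)) (hmeas ((ha n).sub hb) hg.1) hq1

end LpTools

section WeightedSobolevSpace

variable {N : ℕ} {p : ℝ} {Ω : Set (EucN N)} {V : EucN N → ℝ}

lemma continuous_gradient {ψ : EucN N → ℝ} (hψ : ContDiff ℝ (⊤ : ℕ∞) ψ) :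
    Continuous fun x => gradient ψ x :=
  (InnerProductSpace.toDual ℝ (EucN N)).symm.continuous.comp (hψ.continuous_fderiv (by simp))

namespace IsTestFun

variable {φ ψ : EucN N → ℝ}

lemma differentiableAt (hψ : IsTestFun Ω ψ) (x : EucN N) : DifferentiableAt ℝ ψ x :=
  hψ.1.differentiable (by simp) x

lemma zero : IsTestFun Ω fun _ => 0 :=
  ⟨contDiff_const, .zero, by simp [tsupport]⟩

lemma add (hφ : IsTestFun Ω φ) (hψ : IsTestFun Ω ψ) : IsTestFun Ω (φ + ψ) :=
  ⟨hφ.1.add hψ.1, hφ.2.1.add hψ.2.1, (tsupport_add φ ψ).trans (union_subset hφ.2.2 hψ.2.2)⟩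

lemma const_smul (c : ℝ) (hψ : IsTestFun Ω ψ) : IsTestFun Ω (c • ψ) :=
  ⟨contDiff_const.smul hψ.1, hψ.2.1.smul_left (f := fun _ => c),
    (tsupport_smul_subset_right (fun _ => c) ψ).trans hψ.2.2⟩

lemma gradient_add (hφ : IsTestFun Ω φ) (hψ : IsTestFun Ω ψ) (x : EucN N) :
    gradient (φ + ψ) x = gradient φ x + gradient ψ x := by
  simp only [gradient, fderiv_add (hφ.differentiableAt x) (hψ.differentiableAt x), map_add]

lemma gradient_const_smul (c : ℝ) (hψ : IsTestFun Ω ψ) (x : EucN N) :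
    gradient (c • ψ) x = c • gradient ψ x := by
  simp only [gradient, fderiv_const_smul (hψ.differentiableAt x), map_smulₛₗ, conj_trivial]

lemma memLp (hψ : IsTestFun Ω ψ) (q : ℝ≥0∞) : MemLp ψ q :=
  hψ.1.continuous.memLp_of_hasCompactSupport hψ.2.1

lemma memLp_gradient (hψ : IsTestFun Ω ψ) (q : ℝ≥0∞) : MemLp (fun x => gradient ψ x) q :=
  (continuous_gradient hψ.1).memLp_of_hasCompactSupport
    ((hψ.2.1.fderiv ℝ).comp_left (g := (InnerProductSpace.toDual ℝ (EucN N)).symm) (map_zero _))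

lemma memLp_potential (hp : 1 ≤ p) (hV : LocallyIntegrable V) (hV0 : ∀ᵐ x, 0 ≤ V x)
    (hψ : IsTestFun Ω ψ) : MemLp (fun x => V x ^ (1 / p) * ψ x) (ENNReal.ofReal p) := by
  have hp0 : 0 < p := one_pos.trans_le hp
  have hmeas : AEStronglyMeasurable (fun x => V x ^ (1 / p) * ψ x) :=
    (hV.aestronglyMeasurable.aemeasurable.pow_const _).aestronglyMeasurable.mul
      hψ.1.continuous.aestronglyMeasurable
  have hint : Integrable fun x => |ψ x| ^ p • V x :=
    hV.integrable_smul_left_of_hasCompactSupport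
      (hψ.1.continuous.abs.rpow_const fun x => Or.inr hp0.le)
      (hψ.2.1.comp_left (g := fun t => |t| ^ p) (by simp [Real.zero_rpow hp0.ne']))
  rw [← integrable_norm_rpow_iff hmeas (ENNReal.ofReal_pos.2 hp0).ne' ENNReal.ofReal_ne_top,
    ENNReal.toReal_ofReal hp0.le]
  refine hint.congr ?_
  filter_upwards [hV0] with x hx
  rw [norm_mul, Real.mul_rpow (norm_nonneg _) (norm_nonneg _),
    Real.norm_of_nonneg (Real.rpow_nonneg hx _), ← Real.rpow_mul hx, one_div_mul_cancel hp0.ne',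
    Real.rpow_one, Real.norm_eq_abs, smul_eq_mul, mul_comm]

end IsTestFun

variable (p Ω V) in
/-- The subspace of `L^p × L^p × L^p` whose closure is `W^{1,p}_0(Ω; V)`. -/
def testTriples : Submodule ℝ (SobTriple N (ENNReal.ofReal p)) where
  carrier := {w | IsTestTriple (ENNReal.ofReal p) p Ω V w}
  zero_mem' := by
    refine ⟨fun _ => 0, .zero, Lp.coeFn_zero _ _ _, ?_, ?_⟩
    · exact (Lp.coeFn_zero _ _ _).trans (.of_eq (funext fun x => by simp))
    · exact (Lp.coeFn_zero _ _ _).trans (.of_eq (funext fun x => by simp))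
  add_mem' := by
    rintro v w ⟨φ, hφ, hφ₁, hφ₂, hφ₃⟩ ⟨ψ, hψ, hψ₁, hψ₂, hψ₃⟩
    refine ⟨φ + ψ, hφ.add hψ, (Lp.coeFn_add v.1 w.1).trans (hφ₁.add hψ₁), ?_, ?_⟩
    · filter_upwards [Lp.coeFn_add v.2.1 w.2.1, hφ₂, hψ₂] with x hx h₁ h₂
      rw [hφ.gradient_add hψ, ← h₁, ← h₂]
      exact hx
    · filter_upwards [Lp.coeFn_add v.2.2 w.2.2, hφ₃, hψ₃] with x hx h₁ h₂
      rw [Pi.add_apply, mul_add, ← h₁, ← h₂]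
      exact hx
  smul_mem' := by
    rintro c w ⟨ψ, hψ, hψ₁, hψ₂, hψ₃⟩
    refine ⟨c • ψ, hψ.const_smul c, (Lp.coeFn_smul c w.1).trans (hψ₁.const_smul c), ?_, ?_⟩
    · filter_upwards [Lp.coeFn_smul c w.2.1, hψ₂] with x hx h
      rw [hψ.gradient_const_smul, ← h]
      exact hx
    · filter_upwards [Lp.coeFn_smul c w.2.2, hψ₃] with x hx h
      rw [Pi.smul_apply, smul_eq_mul, mul_left_comm, ← h]
      exact hx

lemma smul_mem_W10V (hp : 1 ≤ p) {w : SobTriple N (ENNReal.ofReal p)}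
    (hw : w ∈ W10V N p hp Ω V) (c : ℝ) : c • w ∈ W10V N p hp Ω V :=
  letI := fact_one_le_ofReal hp
  (testTriples p Ω V).topologicalClosure.smul_mem c hw

lemma exists_seq_isTestFun_of_mem_W10V (hp : 1 ≤ p) {w : SobTriple N (ENNReal.ofReal p)}
    (hw : w ∈ W10V N p hp Ω V) : ∃ ψ : ℕ → EucN N → ℝ, (∀ n, IsTestFun Ω (ψ n)) ∧
      Tendsto (fun n => eLpNorm (ψ n - ⇑w.1) (ENNReal.ofReal p) volume) atTop (𝓝 0) ∧
      Tendsto (fun n => eLpNorm ((fun x => gradient (ψ n) x) - ⇑w.2.1) (ENNReal.ofReal p) volume)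
        atTop (𝓝 0) ∧
      Tendsto (fun n => eLpNorm ((fun x => V x ^ (1 / p) * ψ n x) - ⇑w.2.2)
        (ENNReal.ofReal p) volume) atTop (𝓝 0) := by
  have := fact_one_le_ofReal hp
  obtain ⟨v, hv, hvw⟩ := mem_closure_iff_seq_limit.1 hw
  choose ψ hψ hψ₁ hψ₂ hψ₃ using hv
  refine ⟨ψ, hψ, ?_, ?_, ?_⟩
  · exact ((Lp.tendsto_Lp_iff_tendsto_eLpNorm' _ _).1 hvw.fst_nhds).congr fun n =>
      eLpNorm_congr_ae ((hψ₁ n).sub ae_eq_rfl)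
  · exact ((Lp.tendsto_Lp_iff_tendsto_eLpNorm' _ _).1 hvw.snd_nhds.fst_nhds).congr fun n =>
      eLpNorm_congr_ae ((hψ₂ n).sub ae_eq_rfl)
  · exact ((Lp.tendsto_Lp_iff_tendsto_eLpNorm' _ _).1 hvw.snd_nhds.snd_nhds).congr fun n =>
      eLpNorm_congr_ae ((hψ₃ n).sub ae_eq_rfl)

lemma exists_subseq_ae_tendsto_of_tendsto_eLpNorm {α E : Type*} [MeasurableSpace α]
    {μ : Measure α} [NormedAddCommGroup E] {q : ℝ≥0∞} (hq : q ≠ 0) {f : ℕ → α → E} {g : α → E}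
    (hf : ∀ n, AEStronglyMeasurable (f n) μ) (hg : AEStronglyMeasurable g μ)
    (hfg : Tendsto (fun n => eLpNorm (f n - g) q μ) atTop (𝓝 0)) :
    ∃ σ : ℕ → ℕ, Tendsto σ atTop atTop ∧
      ∀ᵐ x ∂μ, Tendsto (fun n => f (σ n) x) atTop (𝓝 (g x)) :=
  have ⟨σ, hσ, hae⟩ := (tendstoInMeasure_of_tendsto_eLpNorm hq hf hg hfg).exists_seq_tendsto_ae
  ⟨σ, hσ.tendsto_atTop, hae⟩

lemma potential_ae_eq_of_mem_W10V (hp : 1 ≤ p) (hV : AEStronglyMeasurable V)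
    {w : SobTriple N (ENNReal.ofReal p)} (hw : w ∈ W10V N p hp Ω V) :
    w.2.2 =ᵐ[volume] fun x => V x ^ (1 / p) * w.1 x := by
  have hp0 : ENNReal.ofReal p ≠ 0 := (ENNReal.ofReal_pos.2 (one_pos.trans_le hp)).ne'
  obtain ⟨ψ, hψ, h₁, -, h₃⟩ := exists_seq_isTestFun_of_mem_W10V hp hw
  have hψm : ∀ n, AEStronglyMeasurable (ψ n) volume := fun n => ((hψ n).memLp 1).1
  obtain ⟨σ, hσ, hae⟩ := exists_subseq_ae_tendsto_of_tendsto_eLpNorm hp0 hψm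
    (Lp.aestronglyMeasurable _) h₁
  obtain ⟨τ, hτ, hae'⟩ := exists_subseq_ae_tendsto_of_tendsto_eLpNorm hp0
    (fun n => (hV.aemeasurable.pow_const (1 / p)).aestronglyMeasurable.mul (hψm (σ n)))
    (Lp.aestronglyMeasurable _) (h₃.comp hσ)
  filter_upwards [hae, hae'] with x hx hx'
  exact tendsto_nhds_unique hx' ((hx.comp hτ).const_mul _)

/-- The function `u`, with weak gradient `g`, belongs to `W^{1,p}_0(Ω; V)`. This is the weighted
Sobolev space at the level of functions, free of the third component `V^{1/p} u` of a triple. -/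
def MemW10V (hp : 1 ≤ p) (Ω : Set (EucN N)) (V : EucN N → ℝ) (u : EucN N → ℝ)
    (g : EucN N → EucN N) : Prop :=
  ∃ w ∈ W10V N p hp Ω V, w.1 =ᵐ[volume] u ∧ w.2.1 =ᵐ[volume] g ∧
    w.2.2 =ᵐ[volume] fun x => V x ^ (1 / p) * u x

lemma memW10V_of_mem_W10V {hp : 1 ≤ p} (hV : AEStronglyMeasurable V)
    {w : SobTriple N (ENNReal.ofReal p)} (hw : w ∈ W10V N p hp Ω V) :
    MemW10V hp Ω V w.1 w.2.1 :=
  ⟨w, hw, ae_eq_rfl, ae_eq_rfl, potential_ae_eq_of_mem_W10V hp hV hw⟩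

namespace MemW10V

variable {hp : 1 ≤ p} {u : EucN N → ℝ} {g : EucN N → EucN N}

lemma memLp (h : MemW10V hp Ω V u g) : MemLp u (ENNReal.ofReal p) :=
  have ⟨_, _, hu, _⟩ := h
  (memLp_congr_ae hu).1 (Lp.memLp _)

lemma memLp_gradient (h : MemW10V hp Ω V u g) : MemLp g (ENNReal.ofReal p) :=
  have ⟨_, _, _, hg, _⟩ := h
  (memLp_congr_ae hg).1 (Lp.memLp _)

lemma memLp_potential (h : MemW10V hp Ω V u g) :
    MemLp (fun x => V x ^ (1 / p) * u x) (ENNReal.ofReal p) :=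
  have ⟨_, _, _, _, hV⟩ := h
  (memLp_congr_ae hV).1 (Lp.memLp _)

lemma integrable_rpow (h : MemW10V hp Ω V u g) : Integrable fun x => |u x| ^ p :=
  integrable_norm_rpow_of_memLp (one_pos.trans_le hp) h.memLp

lemma integrable_gradient_rpow (h : MemW10V hp Ω V u g) : Integrable fun x => ‖g x‖ ^ p :=
  integrable_norm_rpow_of_memLp (one_pos.trans_le hp) h.memLp_gradient

lemma exists_seq (h : MemW10V hp Ω V u g) :
    ∃ ψ : ℕ → EucN N → ℝ, (∀ n, IsTestFun Ω (ψ n)) ∧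
      Tendsto (fun n => eLpNorm (ψ n - u) (ENNReal.ofReal p) volume) atTop (𝓝 0) ∧
      Tendsto (fun n => eLpNorm ((fun x => gradient (ψ n) x) - g) (ENNReal.ofReal p) volume)
        atTop (𝓝 0) ∧
      Tendsto (fun n => eLpNorm ((fun x => V x ^ (1 / p) * ψ n x) - fun x => V x ^ (1 / p) * u x)
        (ENNReal.ofReal p) volume) atTop (𝓝 0) ∧
      ∀ᵐ x, Tendsto (fun n => ψ n x) atTop (𝓝 (u x)) := by
  obtain ⟨w, hw, hu, hg, hVu⟩ := h
  obtain ⟨ψ, hψ, h₁, h₂, h₃⟩ := exists_seq_isTestFun_of_mem_W10V hp hw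
  obtain ⟨σ, hσ, hae⟩ := exists_subseq_ae_tendsto_of_tendsto_eLpNorm
    (ENNReal.ofReal_pos.2 (one_pos.trans_le hp)).ne' (fun n => ((hψ n).memLp 1).1)
    (Lp.aestronglyMeasurable _) h₁
  refine ⟨fun n => ψ (σ n), fun n => hψ _, (h₁.comp hσ).congr fun n => ?_,
    (h₂.comp hσ).congr fun n => ?_, (h₃.comp hσ).congr fun n => ?_, ?_⟩
  · exact eLpNorm_congr_ae (ae_eq_rfl.sub hu)
  · exact eLpNorm_congr_ae (ae_eq_rfl.sub hg)
  · exact eLpNorm_congr_ae (ae_eq_rfl.sub hVu)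
  · filter_upwards [hae, hu] with x hx hux
    rwa [← hux]

lemma of_tendsto {un : ℕ → EucN N → ℝ} {gn : ℕ → EucN N → EucN N}
    (hn : ∀ n, MemW10V hp Ω V (un n) (gn n))
    (hu : MemLp u (ENNReal.ofReal p)) (hg : MemLp g (ENNReal.ofReal p))
    (hVu : MemLp (fun x => V x ^ (1 / p) * u x) (ENNReal.ofReal p))
    (hun : Tendsto (fun n => eLpNorm (un n - u) (ENNReal.ofReal p) volume) atTop (𝓝 0))
    (hgn : Tendsto (fun n => eLpNorm (gn n - g) (ENNReal.ofReal p) volume) atTop (𝓝 0))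
    (hVun : Tendsto (fun n => eLpNorm ((fun x => V x ^ (1 / p) * un n x) -
      fun x => V x ^ (1 / p) * u x) (ENNReal.ofReal p) volume) atTop (𝓝 0)) :
    MemW10V hp Ω V u g := by
  have := fact_one_le_ofReal hp
  choose w hw hwu hwg hwV using hn
  refine ⟨(hu.toLp, hg.toLp, hVu.toLp), ?_, hu.coeFn_toLp, hg.coeFn_toLp, hVu.coeFn_toLp⟩
  refine isClosed_closure.mem_of_tendsto (f := w) (b := atTop) ?_ (Eventually.of_forall hw)
  refine Tendsto.prodMk_nhds ?_ (Tendsto.prodMk_nhds ?_ ?_) <;>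
    rw [Lp.tendsto_Lp_iff_tendsto_eLpNorm']
  · exact hun.congr fun n => eLpNorm_congr_ae ((hwu n).symm.sub hu.coeFn_toLp.symm)
  · exact hgn.congr fun n => eLpNorm_congr_ae ((hwg n).symm.sub hg.coeFn_toLp.symm)
  · exact hVun.congr fun n => eLpNorm_congr_ae ((hwV n).symm.sub hVu.coeFn_toLp.symm)

end MemW10V

lemma IsTestFun.memW10V (hp : 1 ≤ p) (hV : LocallyIntegrable V) (hV0 : ∀ᵐ x, 0 ≤ V x)
    {ψ : EucN N → ℝ} (hψ : IsTestFun Ω ψ) : MemW10V hp Ω V ψ (fun x => gradient ψ x) := by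
  have := fact_one_le_ofReal hp
  have h₁ := (hψ.memLp (ENNReal.ofReal p)).coeFn_toLp
  have h₂ := (hψ.memLp_gradient (ENNReal.ofReal p)).coeFn_toLp
  have h₃ := (hψ.memLp_potential hp hV hV0).coeFn_toLp
  exact ⟨(_, _, _), subset_closure ⟨ψ, hψ, h₁, h₂, h₃⟩, h₁, h₂, h₃⟩

lemma fst_snd_mem_W10_of_mem_W10V (hp : 1 ≤ p) {w : SobTriple N (ENNReal.ofReal p)}
    (hw : w ∈ W10V N p hp Ω V) : (w.1, w.2.1) ∈ W10 N p hp Ω :=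
  letI := fact_one_le_ofReal hp
  map_mem_closure (f := fun w : SobTriple N (ENNReal.ofReal p) => (w.1, w.2.1))
    (continuous_fst.prodMk continuous_snd.fst) hw fun _ ⟨ψ, hψ, h₁, h₂, _⟩ => ⟨ψ, hψ, h₁, h₂⟩

/-- The Poincaré inequality: `λ_{1,p}(Ω)` is defined on the unit sphere of `L^p`, and both sides
are `p`-homogeneous. -/
lemma MemW10V.mul_integral_rpow_le {hp : 1 ≤ p} {u : EucN N → ℝ} {g : EucN N → EucN N}
    (h : MemW10V hp Ω V u g) {L : ℝ} (hL : ENNReal.ofReal L ≤ lambda1p N p hp Ω) :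
    L * ∫ x, |u x| ^ p ≤ ∫ x, ‖g x‖ ^ p := by
  have hp0 : 0 < p := one_pos.trans_le hp
  have := fact_one_le_ofReal hp
  obtain ⟨w, hw, hu, hg, -⟩ := h
  have hnorm_u : ∫ x, |u x| ^ p = ‖w.1‖ ^ p :=
    (integral_congr_ae (hu.fun_comp fun t => ‖t‖ ^ p)).symm.trans
      (integral_norm_rpow_eq_norm_Lp_rpow hp0 _)
  have hnorm_g : ∫ x, ‖g x‖ ^ p = ‖w.2.1‖ ^ p :=
    (integral_congr_ae (hg.fun_comp fun t => ‖t‖ ^ p)).symm.trans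
      (integral_norm_rpow_eq_norm_Lp_rpow hp0 _)
  rw [hnorm_u, hnorm_g]
  rcases (norm_nonneg w.1).eq_or_lt with hzero | hpos
  · rw [← hzero, Real.zero_rpow hp0.ne', mul_zero]
    positivity
  set s := ‖w.1‖⁻¹
  have hunit : ∫ x, |(s • w.1) x| ^ p = 1 := by
    refine (integral_norm_rpow_eq_norm_Lp_rpow hp0 (s • w.1)).trans ?_
    rw [norm_smul, norm_inv, norm_norm, inv_mul_cancel₀ hpos.ne', Real.one_rpow]
  have hle : lambda1p N p hp Ω ≤ ENNReal.ofReal (∫ x, ‖(s • w.2.1) x‖ ^ p) :=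
    sInf_le ⟨_, fst_snd_mem_W10_of_mem_W10V hp (smul_mem_W10V hp hw s), hunit, rfl⟩
  rw [integral_norm_rpow_eq_norm_Lp_rpow hp0, norm_smul, norm_inv, norm_norm,
    Real.mul_rpow (by positivity) (norm_nonneg _), Real.inv_rpow hpos.le] at hle
  have hreal := (ENNReal.ofReal_le_ofReal_iff (by positivity)).1 (hL.trans hle)
  rwa [inv_mul_eq_div, le_div_iff₀ (by positivity)] at hreal

end WeightedSobolevSpace

section ChainRule

variable {N : ℕ} {p : ℝ} {hp : 1 ≤ p} {Ω Ω' : Set (EucN N)} {V : EucN N → ℝ}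
  {u : EucN N → ℝ} {g : EucN N → EucN N}

lemma gradient_comp_mul {F : ℝ → ℝ} {ψ η : EucN N → ℝ} {x : EucN N}
    (hF : DifferentiableAt ℝ F (ψ x)) (hψ : DifferentiableAt ℝ ψ x)
    (hη : DifferentiableAt ℝ η x) :
    gradient (fun y => F (ψ y) * η y) x =
      (deriv F (ψ x) * η x) • gradient ψ x + F (ψ x) • gradient η x := by
  have hderiv := (hF.hasDerivAt.comp_hasFDerivAt x hψ.hasFDerivAt).mul hη.hasFDerivAt
  simp only [gradient]
  rw [show fderiv ℝ (fun y => F (ψ y) * η y) x = _ from hderiv.fderiv]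
  simp only [map_add, map_smul, Function.comp, smul_smul, mul_comm (η x)]
  exact add_comm _ _

lemma IsTestFun.comp_mul {F : ℝ → ℝ} (hF : ContDiff ℝ (⊤ : ℕ∞) F) (hF0 : F 0 = 0)
    {ψ η : EucN N → ℝ} (hψ : IsTestFun Ω ψ) (hη : ContDiff ℝ (⊤ : ℕ∞) η)
    (hsupp : ∀ x ∈ Ω, x ∈ tsupport η → x ∈ Ω') :
    IsTestFun Ω' fun y => F (ψ y) * η y :=
  ⟨(hF.comp hψ.1).mul hη, (hψ.2.1.comp_left (g := F) hF0).mul_right, fun x hx =>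
    hsupp x (hψ.2.2 (closure_mono (Function.support_comp_subset hF0 ψ)
      (tsupport_mul_subset_left (f := F ∘ ψ) hx))) (tsupport_mul_subset_right hx)⟩

/-- Limits of chain and product rules take this form: the multipliers only converge pointwise. -/
lemma MemW10V.of_tendsto_multipliers {un : ℕ → EucN N → ℝ} {gn : ℕ → EucN N → EucN N}
    {a b : ℕ → EucN N → ℝ} {c : ℕ → EucN N → EucN N} {a' b' : EucN N → ℝ} {c' : EucN N → EucN N}
    {M : ℝ} (ha : ∀ n, AEStronglyMeasurable (a n)) (hb : ∀ n, AEStronglyMeasurable (b n))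
    (hc : ∀ n, AEStronglyMeasurable (c n)) (haM : ∀ n x, ‖a n x‖ ≤ M) (hbM : ∀ n x, ‖b n x‖ ≤ M)
    (hcM : ∀ n x, ‖c n x‖ ≤ M) (haa' : ∀ᵐ x, Tendsto (fun n => a n x) atTop (𝓝 (a' x)))
    (hbb' : ∀ᵐ x, Tendsto (fun n => b n x) atTop (𝓝 (b' x)))
    (hcc' : ∀ᵐ x, Tendsto (fun n => c n x) atTop (𝓝 (c' x)))
    (hun : ∀ n, MemLp (un n) (ENNReal.ofReal p)) (hgn : ∀ n, MemLp (gn n) (ENNReal.ofReal p))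
    (hVun : ∀ n, MemLp (fun x => V x ^ (1 / p) * un n x) (ENNReal.ofReal p))
    (h : MemW10V hp Ω V u g)
    (hu : Tendsto (fun n => eLpNorm (un n - u) (ENNReal.ofReal p) volume) atTop (𝓝 0))
    (hg : Tendsto (fun n => eLpNorm (gn n - g) (ENNReal.ofReal p) volume) atTop (𝓝 0))
    (hVu : Tendsto (fun n => eLpNorm ((fun x => V x ^ (1 / p) * un n x) -
      fun x => V x ^ (1 / p) * u x) (ENNReal.ofReal p) volume) atTop (𝓝 0))
    (hmem : ∀ n, MemW10V hp Ω' V (fun x => a n x * un n x)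
      (fun x => b n x • gn n x + un n x • c n x)) :
    MemW10V hp Ω' V (fun x => a' x * u x) (fun x => b' x • g x + u x • c' x) := by
  have hp1 : 1 ≤ ENNReal.ofReal p := ENNReal.one_le_ofReal.2 hp
  have hbdd : ∀ {E : Type} [NormedAddCommGroup E] {s : ℕ → EucN N → E} {s' : EucN N → E},
      (∀ n, AEStronglyMeasurable (s n)) → (∀ n x, ‖s n x‖ ≤ M) →
      (∀ᵐ x, Tendsto (fun n => s n x) atTop (𝓝 (s' x))) → MemLp s' ∞ := fun hs hsM hss' =>
    memLp_top_of_bound (aestronglyMeasurable_of_tendsto_ae atTop hs hss') M <| by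
      filter_upwards [hss'] with x hx using le_of_tendsto' hx.norm fun n => hsM n x
  have hVa : ∀ {s v : EucN N → ℝ}, (fun x => V x ^ (1 / p) * (s x * v x)) =
      fun x => s x • (V x ^ (1 / p) * v x) := fun {s v} => by
    ext x
    rw [smul_eq_mul, mul_left_comm]
  have hb' := h.memLp_gradient.smul (r := ENNReal.ofReal p) (hbdd hb hbM hbb')
  have hc' := (hbdd hc hcM hcc').smul (r := ENNReal.ofReal p) h.memLp
  let B {E : Type} [NormedAddCommGroup E] [NormedSpace ℝ E] :=
    ContinuousLinearMap.lsmul ℝ ℝ (E := E)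
  have hb_lim := tendsto_eLpNorm_bilin_sub_bilin B hp1 ENNReal.ofReal_ne_top hb hbM hbb'
    (fun n => (hgn n).1) h.memLp_gradient hg
  have hc_lim := tendsto_eLpNorm_bilin_sub_bilin B.flip hp1 ENNReal.ofReal_ne_top hc hcM hcc'
    (fun n => (hun n).1) h.memLp hu
  refine .of_tendsto hmem (h.memLp.smul (hbdd ha haM haa')) (hb'.add hc') ?_ ?_ ?_ ?_
  · rw [hVa]
    exact h.memLp_potential.smul (hbdd ha haM haa')
  · exact tendsto_eLpNorm_bilin_sub_bilin B hp1 ENNReal.ofReal_ne_top ha haM haa'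
      (fun n => (hun n).1) h.memLp hu
  · refine tendsto_of_tendsto_of_tendsto_of_le_of_le tendsto_const_nhds
      (by simpa only [add_zero] using hb_lim.add hc_lim) (fun _ => zero_le) fun n => ?_
    refine le_trans (le_of_eq (congrArg (eLpNorm · _ _) (funext fun x => ?_))) (eLpNorm_add_le
      ((hb n).smul (hgn n).1 |>.sub hb'.1) ((hun n).1.smul (hc n) |>.sub hc'.1) hp1)
    exact add_sub_add_comm _ _ _ _
  · simp only [hVa]
    exact tendsto_eLpNorm_bilin_sub_bilin B hp1 ENNReal.ofReal_ne_top ha haM haa'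
      (fun n => (hVun n).1) h.memLp_potential hVu

lemma abs_dslope_le_of_abs_deriv_le {F : ℝ → ℝ} {C : ℝ} (hF : Differentiable ℝ F)
    (hC : ∀ t, |deriv F t| ≤ C) (a t : ℝ) : |dslope F a t| ≤ C := by
  rcases eq_or_ne t a with rfl | hta
  · rw [dslope_same]
    exact hC _
  · rw [dslope_of_ne _ hta, slope_def_field, abs_div, div_le_iff₀ (abs_pos.2 (sub_ne_zero.2 hta))]
    exact convex_univ.norm_image_sub_le_of_norm_deriv_le (fun s _ => hF s) (fun s _ => hC s)
      (mem_univ a) (mem_univ t)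

lemma continuous_dslope {F : ℝ → ℝ} (hF : Differentiable ℝ F) (a : ℝ) :
    Continuous (dslope F a) :=
  continuous_iff_continuousAt.2 fun t => by
    rcases eq_or_ne t a with rfl | hta
    · exact continuousAt_dslope_same.2 (hF t)
    · exact (continuousAt_dslope_of_ne hta).2 (hF t).continuousAt

lemma dslope_zero_mul_self {F : ℝ → ℝ} (hF0 : F 0 = 0) (t : ℝ) : dslope F 0 t * t = F t := by
  simpa only [sub_zero, smul_eq_mul, hF0, mul_comm t] using sub_smul_dslope F 0 t

variable {η : EucN N → ℝ} {B C : ℝ}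

/-- The factorization `F(u) = (F(u)/u) u` exhibits the chain rule as a limit of bounded
multipliers acting on convergent sequences. -/
lemma MemW10V.comp_mul (hV : LocallyIntegrable V) (hV0 : ∀ᵐ x, 0 ≤ V x) (h : MemW10V hp Ω V u g)
    {F : ℝ → ℝ} (hF : ContDiff ℝ (⊤ : ℕ∞) F) (hF0 : F 0 = 0) (hC : ∀ t, |deriv F t| ≤ C)
    (hη : ContDiff ℝ (⊤ : ℕ∞) η) (hηB : ∀ x, |η x| ≤ B) (hηG : ∀ x, ‖gradient η x‖ ≤ B)
    (hsupp : ∀ x ∈ Ω, x ∈ tsupport η → x ∈ Ω') :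
    MemW10V hp Ω' V (fun x => F (u x) * η x)
      (fun x => (deriv F (u x) * η x) • g x + F (u x) • gradient η x) := by
  have hFd : Differentiable ℝ F := hF.differentiable (by simp)
  have hC0 : 0 ≤ C := (abs_nonneg _).trans (hC 0)
  have hF' : Continuous (deriv F) := hF.continuous_deriv (by simp)
  have hS : Continuous (dslope F 0) := continuous_dslope hFd 0
  have hSC : ∀ t, |dslope F 0 t| ≤ C := abs_dslope_le_of_abs_deriv_le hFd hC 0
  have hηc : Continuous fun x => gradient η x := continuous_gradient hη
  obtain ⟨ψ, hψ, h₁, h₂, h₃, hae⟩ := h.exists_seq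
  have hψc : ∀ n, Continuous (ψ n) := fun n => (hψ n).1.continuous
  have hmul : ∀ s y, dslope F 0 s * y * s = F s * y := fun s y => by
    rw [← dslope_zero_mul_self hF0 s]
    ring
  have hsmul : ∀ s (y : EucN N), s • dslope F 0 s • y = F s • y := fun s y => by
    rw [smul_smul, mul_comm s, dslope_zero_mul_self hF0]
  have key := of_tendsto_multipliers (Ω' := Ω') (M := C * B)
    (a := fun n x => dslope F 0 (ψ n x) * η x) (b := fun n x => deriv F (ψ n x) * η x)
    (c := fun n x => dslope F 0 (ψ n x) • gradient η x) (a' := fun x => dslope F 0 (u x) * η x)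
    (b' := fun x => deriv F (u x) * η x) (c' := fun x => dslope F 0 (u x) • gradient η x)
    (fun n => ((hS.comp (hψc n)).mul hη.continuous).aestronglyMeasurable)
    (fun n => ((hF'.comp (hψc n)).mul hη.continuous).aestronglyMeasurable)
    (fun n => ((hS.comp (hψc n)).smul hηc).aestronglyMeasurable)
    (fun n x => norm_mul_le_of_le (hSC _) (hηB x)) (fun n x => norm_mul_le_of_le (hC _) (hηB x))
    (fun n x => (norm_smul_le _ _).trans (mul_le_mul (hSC _) (hηG x) (norm_nonneg _) hC0))
    (hae.mono fun x hx => ((hS.tendsto _).comp hx).mul_const _)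
    (hae.mono fun x hx => ((hF'.tendsto _).comp hx).mul_const _)
    (hae.mono fun x hx => ((hS.tendsto _).comp hx).smul_const _)
    (fun n => (hψ n).memLp _) (fun n => (hψ n).memLp_gradient _)
    (fun n => (hψ n).memLp_potential hp hV hV0) h h₁ h₂ h₃ fun n => ?_
  · simpa only [hmul, hsmul] using key
  · simp only [hmul, hsmul]
    have hgrad : (fun x => gradient (fun y => F (ψ n y) * η y) x) = fun x =>
        (deriv F (ψ n x) * η x) • gradient (ψ n) x + F (ψ n x) • gradient η x := funext fun x =>
      gradient_comp_mul (hFd _) ((hψ n).differentiableAt x) (hη.differentiable (by simp) x)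
    exact hgrad ▸ ((hψ n).comp_mul hF hF0 hη hsupp).memW10V hp hV hV0

lemma exists_tendsto_dslope_zero {F : ℕ → ℝ → ℝ} {F' : ℝ → ℝ} {d : ℝ} (hF0 : ∀ n, F n 0 = 0)
    (hlim : ∀ t, Tendsto (fun n => F n t) atTop (𝓝 (F' t)))
    (hderiv : Tendsto (fun n => deriv (F n) 0) atTop (𝓝 d)) :
    ∃ S : ℝ → ℝ, (∀ t, Tendsto (fun n => dslope (F n) 0 t) atTop (𝓝 (S t))) ∧
      ∀ t, S t * t = F' t := by
  have hslope : ∀ t, ∃ s, Tendsto (fun n => dslope (F n) 0 t) atTop (𝓝 s) := fun t => by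
    rcases eq_or_ne t 0 with rfl | ht
    · exact ⟨d, by simpa only [dslope_same] using hderiv⟩
    · refine ⟨F' t / t, ?_⟩
      simpa only [dslope_of_ne _ ht, slope_def_field, hF0, sub_zero] using (hlim t).div_const t
  choose S hS using hslope
  refine ⟨S, hS, fun t => tendsto_nhds_unique ((hS t).mul_const t) ?_⟩
  simpa only [dslope_zero_mul_self, hF0] using hlim t

/-- The chain rule for functions that need not be differentiable, such as Lipschitz truncations. -/
lemma MemW10V.comp_mul_of_tendsto (hV : LocallyIntegrable V) (hV0 : ∀ᵐ x, 0 ≤ V x)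
    (h : MemW10V hp Ω V u g) {F : ℕ → ℝ → ℝ} {F' D : ℝ → ℝ} (hF : ∀ n, ContDiff ℝ (⊤ : ℕ∞) (F n))
    (hF0 : ∀ n, F n 0 = 0) (hC : ∀ n t, |deriv (F n) t| ≤ C)
    (hlim : ∀ t, Tendsto (fun n => F n t) atTop (𝓝 (F' t)))
    (hderiv : ∀ t, Tendsto (fun n => deriv (F n) t) atTop (𝓝 (D t)))
    (hη : ContDiff ℝ (⊤ : ℕ∞) η) (hηB : ∀ x, |η x| ≤ B) (hηG : ∀ x, ‖gradient η x‖ ≤ B)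
    (hsupp : ∀ x ∈ Ω, x ∈ tsupport η → x ∈ Ω') :
    MemW10V hp Ω' V (fun x => F' (u x) * η x)
      (fun x => (D (u x) * η x) • g x + F' (u x) • gradient η x) := by
  have hFd : ∀ n, Differentiable ℝ (F n) := fun n => (hF n).differentiable (by simp)
  have hC0 : 0 ≤ C := (abs_nonneg _).trans (hC 0 0)
  have hSC : ∀ n t, |dslope (F n) 0 t| ≤ C := fun n =>
    abs_dslope_le_of_abs_deriv_le (hFd n) (hC n) 0
  obtain ⟨S, hS, hSF⟩ := exists_tendsto_dslope_zero hF0 hlim (hderiv 0)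
  have hmul : ∀ {s t y : ℝ}, s * y * t = (s * t) * y := fun {_ _ _} => mul_right_comm _ _ _
  have hsmul : ∀ {s t : ℝ} {y : EucN N}, t • s • y = (s * t) • y := fun {_ _ _} => by
    rw [smul_smul, mul_comm]
  have hum : AEStronglyMeasurable u := h.memLp.1
  have hFu : ∀ n, AEStronglyMeasurable fun x => dslope (F n) 0 (u x) := fun n =>
    (continuous_dslope (hFd n) 0).comp_aestronglyMeasurable hum
  have hDu : ∀ n, AEStronglyMeasurable fun x => deriv (F n) (u x) := fun n =>
    ((hF n).continuous_deriv (by simp)).comp_aestronglyMeasurable hum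
  have hself : ∀ {E : Type} [NormedAddCommGroup E] (f : EucN N → E),
      Tendsto (fun _ : ℕ => eLpNorm (f - f) (ENNReal.ofReal p) volume) atTop (𝓝 0) := fun f => by
    simp only [sub_self, eLpNorm_zero, tendsto_const_nhds_iff]
  have key := of_tendsto_multipliers (Ω' := Ω') (M := C * B)
    (a := fun n x => dslope (F n) 0 (u x) * η x) (b := fun n x => deriv (F n) (u x) * η x)
    (c := fun n x => dslope (F n) 0 (u x) • gradient η x) (a' := fun x => S (u x) * η x)
    (b' := fun x => D (u x) * η x) (c' := fun x => S (u x) • gradient η x)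
    (fun n => (hFu n).mul hη.continuous.aestronglyMeasurable)
    (fun n => (hDu n).mul hη.continuous.aestronglyMeasurable)
    (fun n => (hFu n).smul (continuous_gradient hη).aestronglyMeasurable)
    (fun n x => norm_mul_le_of_le (hSC _ _) (hηB x))
    (fun n x => norm_mul_le_of_le (hC _ _) (hηB x))
    (fun n x => (norm_smul_le _ _).trans (mul_le_mul (hSC _ _) (hηG x) (norm_nonneg _) hC0))
    (.of_forall fun x => (hS _).mul_const _) (.of_forall fun x => (hderiv _).mul_const _)
    (.of_forall fun x => (hS _).smul_const _) (fun _ => h.memLp) (fun _ => h.memLp_gradient)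
    (fun _ => h.memLp_potential) h (hself _) (hself _) (hself _) fun n => by
      simpa only [hmul, hsmul, dslope_zero_mul_self (hF0 n)] using
        h.comp_mul hV hV0 (hF n) (hF0 n) (hC n) hη hηB hηG hsupp
  simpa only [hmul, hsmul, hSF] using key

end ChainRule

section SoftThreshold

/-- Soft thresholding `t ↦ sign(t) (|t| - k)⁺` at level `k ≥ 0`, the truncation used in the energy
estimates. It is written with absolute values because these can be smoothed. -/
def softThreshold (k t : ℝ) : ℝ := t + (|t - k| - |t + k|) / 2

/-- The derivative of `softThreshold k`, with the value `1 / 2` at the kinks `± k` when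
`0 < k`. -/
def softThresholdDeriv (k t : ℝ) : ℝ := 1 + (Real.sign (t - k) - Real.sign (t + k)) / 2

/-- Soft thresholding with `|s|` replaced by `√(s² + δ)`. -/
def smoothSoftThreshold (k δ t : ℝ) : ℝ := t + (√((t - k) ^ 2 + δ) - √((t + k) ^ 2 + δ)) / 2

variable {k : ℝ}

lemma abs_softThreshold (hk : 0 ≤ k) (t : ℝ) : |softThreshold k t| = max (|t| - k) 0 := by
  unfold softThreshold
  grind

lemma abs_softThreshold_le (hk : 0 ≤ k) (t : ℝ) : |softThreshold k t| ≤ |t| := by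
  rw [abs_softThreshold hk]
  exact max_le (sub_le_self _ hk) (abs_nonneg t)

lemma mul_softThreshold_nonneg (hk : 0 ≤ k) (t : ℝ) : 0 ≤ t * softThreshold k t := by
  refine mul_nonneg_iff.2 ?_
  unfold softThreshold
  grind

lemma softThresholdDeriv_of_abs_lt (hk : 0 ≤ k) {t : ℝ} (ht : k < |t|) :
    softThresholdDeriv k t = 1 := by
  unfold softThresholdDeriv
  rcases lt_abs.1 ht with h | h
  · rw [Real.sign_of_pos (by linarith), Real.sign_of_pos (by linarith), sub_self, zero_div,
      add_zero]
  · rw [Real.sign_of_neg (by linarith), Real.sign_of_neg (by linarith), sub_self, zero_div,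
      add_zero]

lemma softThresholdDeriv_mem_Icc (hk : 0 ≤ k) (t : ℝ) : softThresholdDeriv k t ∈ Icc 0 1 := by
  have hmono : Monotone Real.sign := fun s t hst => by
    simp only [Real.sign]
    grind
  have hle := hmono (show t - k ≤ t + k by linarith)
  have hneg : ∀ s : ℝ, -1 ≤ Real.sign s ∧ Real.sign s ≤ 1 := fun s => by
    rcases Real.sign_apply_eq s with h | h | h <;> norm_num [h]
  have h₁ := hneg (t - k)
  have h₂ := hneg (t + k)
  constructor <;> unfold softThresholdDeriv <;> linarith

lemma contDiff_smoothSoftThreshold (k : ℝ) {δ : ℝ} (hδ : 0 < δ) :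
    ContDiff ℝ (⊤ : ℕ∞) (smoothSoftThreshold k δ) :=
  contDiff_id.add (((ContDiff.sqrt (by fun_prop) fun t => by positivity).sub
    (ContDiff.sqrt (by fun_prop) fun t => by positivity)).div_const 2)

lemma deriv_smoothSoftThreshold (k : ℝ) {δ : ℝ} (hδ : 0 < δ) (t : ℝ) :
    deriv (smoothSoftThreshold k δ) t =
      1 + ((t - k) / √((t - k) ^ 2 + δ) - (t + k) / √((t + k) ^ 2 + δ)) / 2 := by
  have hsqrt : ∀ c, HasDerivAt (fun s => √((s + c) ^ 2 + δ)) ((t + c) / √((t + c) ^ 2 + δ)) t := by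
    intro c
    have hsq : HasDerivAt (fun s => (s + c) ^ 2 + δ) (2 * (t + c)) t := by
      simpa using (((hasDerivAt_id t).add_const c).pow 2).add_const δ
    simpa only [mul_div_mul_left _ _ (two_ne_zero' ℝ)] using hsq.sqrt (by positivity)
  have hneg := hsqrt (-k)
  simp only [← sub_eq_add_neg] at hneg
  exact ((hasDerivAt_id t).add ((hneg.sub (hsqrt k)).div_const 2)).deriv

lemma abs_deriv_smoothSoftThreshold_le (k : ℝ) {δ : ℝ} (hδ : 0 < δ) (t : ℝ) :
    |deriv (smoothSoftThreshold k δ) t| ≤ 2 := by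
  have hsqrt : ∀ s : ℝ, |s / √(s ^ 2 + δ)| ≤ 1 := fun s => by
    rw [abs_div, abs_of_nonneg (Real.sqrt_nonneg _), div_le_one (by positivity)]
    exact Real.abs_le_sqrt (by linarith)
  have h₁ := abs_le.1 (hsqrt (t - k))
  have h₂ := abs_le.1 (hsqrt (t + k))
  rw [deriv_smoothSoftThreshold k hδ, abs_le]
  constructor <;> linarith

lemma tendsto_sqrt_sq_add (s : ℝ) :
    Tendsto (fun n : ℕ => √(s ^ 2 + 1 / ((n : ℝ) + 1))) atTop (𝓝 |s|) := by
  have hsqrt := ((tendsto_one_div_add_atTop_nhds_zero_nat (𝕜 := ℝ)).const_add (s ^ 2)).sqrt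
  rwa [add_zero, Real.sqrt_sq_eq_abs] at hsqrt

lemma tendsto_smoothSoftThreshold (k t : ℝ) :
    Tendsto (fun n : ℕ => smoothSoftThreshold k (1 / ((n : ℝ) + 1)) t) atTop
      (𝓝 (softThreshold k t)) :=
  (((tendsto_sqrt_sq_add (t - k)).sub (tendsto_sqrt_sq_add (t + k))).div_const 2).const_add t

lemma tendsto_deriv_smoothSoftThreshold (k t : ℝ) :
    Tendsto (fun n : ℕ => deriv (smoothSoftThreshold k (1 / ((n : ℝ) + 1))) t) atTop
      (𝓝 (softThresholdDeriv k t)) := by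
  have hsign : ∀ s : ℝ, Tendsto (fun n : ℕ => s / √(s ^ 2 + 1 / ((n : ℝ) + 1))) atTop
      (𝓝 (Real.sign s)) := fun s => by
    rcases eq_or_ne s 0 with rfl | hs
    · simp only [zero_div, Real.sign_zero, tendsto_const_nhds_iff]
    · have hdiv : Real.sign s = s / |s| := by
        rw [eq_div_iff (abs_ne_zero.2 hs)]
        simp only [Real.sign]
        grind
      exact hdiv ▸ tendsto_const_nhds.div (tendsto_sqrt_sq_add s) (abs_ne_zero.2 hs)
  simp only [deriv_smoothSoftThreshold k Nat.one_div_pos_of_nat]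
  exact (((hsign (t - k)).sub (hsign (t + k))).div_const 2).const_add 1

lemma MemW10V.softThreshold_mul {N : ℕ} {p : ℝ} {hp : 1 ≤ p} {Ω Ω' : Set (EucN N)} {V : EucN N → ℝ}
    {u : EucN N → ℝ} {g : EucN N → EucN N} (h : MemW10V hp Ω V u g) (hV : LocallyIntegrable V)
    (hV0 : ∀ᵐ x, 0 ≤ V x) (k : ℝ) {η : EucN N → ℝ} {B : ℝ} (hη : ContDiff ℝ (⊤ : ℕ∞) η)
    (hηB : ∀ x, |η x| ≤ B) (hηG : ∀ x, ‖gradient η x‖ ≤ B)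
    (hsupp : ∀ x ∈ Ω, x ∈ tsupport η → x ∈ Ω') :
    MemW10V hp Ω' V (fun x => softThreshold k (u x) * η x)
      (fun x => (softThresholdDeriv k (u x) * η x) • g x + softThreshold k (u x) • gradient η x) :=
  h.comp_mul_of_tendsto hV hV0
    (fun n => contDiff_smoothSoftThreshold k (Nat.one_div_pos_of_nat (n := n)))
    (fun n => by simp [smoothSoftThreshold])
    (fun n => abs_deriv_smoothSoftThreshold_le k Nat.one_div_pos_of_nat)
    (tendsto_smoothSoftThreshold k) (tendsto_deriv_smoothSoftThreshold k) hη hηB hηG hsupp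

end SoftThreshold

section DualityPairing

variable {α E : Type*} [MeasurableSpace α] {μ : Measure α} [NormedAddCommGroup E]
  [InnerProductSpace ℝ E] {p : ℝ}

lemma norm_norm_rpow_sub_two_smul (hp : 1 < p) (a : E) :
    ‖‖a‖ ^ (p - 2) • a‖ = ‖a‖ ^ (p - 1) := by
  rcases eq_or_ne a 0 with rfl | ha
  · simp [Real.zero_rpow (sub_pos.2 hp).ne']
  · rw [norm_smul, Real.norm_of_nonneg (by positivity), ← Real.rpow_add_one (norm_ne_zero_iff.2 ha)]
    ring_nf

lemma abs_norm_rpow_mul_inner_le (hp : 1 < p) (a b : E) :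
    |‖a‖ ^ (p - 2) * ⟪a, b⟫| ≤ ‖a‖ ^ (p - 1) * ‖b‖ := by
  rw [← real_inner_smul_left, ← norm_norm_rpow_sub_two_smul hp]
  exact abs_real_inner_le_norm _ b

lemma memLp_norm_rpow_smul (hp : 1 < p) {a : α → E} (ha : MemLp a (ENNReal.ofReal p) μ) :
    MemLp (fun x => ‖a x‖ ^ (p - 2) • a x) (ENNReal.ofReal (p / (p - 1))) μ := by
  have hpow := ha.norm_rpow_div (ENNReal.ofReal (p - 1))
  rw [ENNReal.toReal_ofReal (sub_pos.2 hp).le, ← ENNReal.ofReal_div_of_pos (sub_pos.2 hp)] at hpow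
  refine hpow.of_le ((ha.1.norm.aemeasurable.pow_const _).aestronglyMeasurable.smul ha.1)
    (Eventually.of_forall fun x => ?_)
  rw [norm_norm_rpow_sub_two_smul hp]
  exact Real.le_norm_self _

lemma integrable_norm_rpow_mul_norm (hp : 1 < p) {F : Type*} [NormedAddCommGroup F] {a : α → E}
    (ha : MemLp a (ENNReal.ofReal p) μ) {b : α → F} (hb : MemLp b (ENNReal.ofReal p) μ) :
    Integrable (fun x => ‖a x‖ ^ (p - 1) * ‖b x‖) μ := by
  have : ENNReal.HolderTriple (ENNReal.ofReal (p / (p - 1))) (ENNReal.ofReal p) 1 :=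
    (Real.HolderConjugate.conjExponent hp).symm.ennrealOfReal
  simpa only [Pi.mul_def, norm_norm_rpow_sub_two_smul hp] using
    (memLp_norm_rpow_smul hp ha).norm.integrable_mul hb.norm

lemma integrable_norm_rpow_mul_inner (hp : 1 < p) {a b : α → E}
    (ha : MemLp a (ENNReal.ofReal p) μ) (hb : MemLp b (ENNReal.ofReal p) μ) :
    Integrable (fun x => ‖a x‖ ^ (p - 2) * ⟪a x, b x⟫) μ :=
  (integrable_norm_rpow_mul_norm hp ha hb).mono'
    ((ha.1.norm.aemeasurable.pow_const _).aestronglyMeasurable.mul (ha.1.inner hb.1))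
    (Eventually.of_forall fun _ => abs_norm_rpow_mul_inner_le hp _ _)

lemma exists_clm_eq_integral_norm_rpow_mul_inner (hp : 1 < p) [Fact (1 ≤ ENNReal.ofReal p)]
    {a : α → E} (ha : MemLp a (ENNReal.ofReal p) μ) :
    ∃ T : Lp E (ENNReal.ofReal p) μ →L[ℝ] ℝ, ∀ b, T b = ∫ x, ‖a x‖ ^ (p - 2) * ⟪a x, b x⟫ ∂μ := by
  have hconj : (p / (p - 1)).HolderConjugate p := (Real.HolderConjugate.conjExponent hp).symm
  have : Fact (1 ≤ ENNReal.ofReal (p / (p - 1))) := ⟨ENNReal.one_le_ofReal.2 hconj.lt.le⟩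
  have : ENNReal.HolderConjugate (ENNReal.ofReal (p / (p - 1))) (ENNReal.ofReal p) :=
    hconj.ennrealOfReal
  refine ⟨(innerSL ℝ).lpPairing μ _ _ (memLp_norm_rpow_smul hp ha).toLp, fun b => ?_⟩
  rw [ContinuousLinearMap.lpPairing_eq_integral]
  refine integral_congr_ae ?_
  filter_upwards [(memLp_norm_rpow_smul hp ha).coeFn_toLp] with x hx
  rw [hx, innerSL_apply_apply, real_inner_smul_left]

end DualityPairing

section WeakEquation

variable {N : ℕ} {p : ℝ} {Ω : Set (EucN N)} {V : EucN N → ℝ}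

lemma norm_rpow_mul_inner_potential {v : ℝ} (hp : p ≠ 0) (hv : 0 ≤ v) (t s : ℝ) :
    ‖v ^ (1 / p) * t‖ ^ (p - 2) * ⟪v ^ (1 / p) * t, v ^ (1 / p) * s⟫ =
      v * |t| ^ (p - 2) * t * s := by
  rcases hv.eq_or_lt with rfl | hv'
  · simp [Real.zero_rpow (inv_ne_zero hp)]
  · have hpow : (v ^ (1 / p)) ^ (p - 2) * (v ^ (1 / p) * v ^ (1 / p)) = v := by
      rw [← Real.rpow_mul hv, ← Real.rpow_add hv', ← Real.rpow_add hv',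
        show 1 / p * (p - 2) + (1 / p + 1 / p) = 1 by field_simp; ring, Real.rpow_one]
    have hroot : 0 ≤ v ^ (1 / p) := Real.rpow_nonneg hv _
    rw [norm_mul, Real.norm_of_nonneg hroot, Real.mul_rpow hroot (norm_nonneg t),
      Real.norm_eq_abs, real_inner_eq_re_inner, RCLike.inner_apply, conj_trivial, RCLike.re_to_real]
    linear_combination |t| ^ (p - 2) * t * s * hpow

lemma abs_rpow_mul_mul_eq_norm_rpow_mul_inner (t s : ℝ) :
    |t| ^ (p - 2) * t * s = ‖t‖ ^ (p - 2) * ⟪t, s⟫ := by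
  rw [real_inner_eq_re_inner, RCLike.inner_apply, conj_trivial, RCLike.re_to_real,
    Real.norm_eq_abs]
  ring

/-- The test triples are dense and the duality pairings are continuous. -/
lemma IsCriticalV.weak_equation (hp : 1 < p) (hV : AEStronglyMeasurable V)
    (hV0 : ∀ᵐ x, 0 ≤ V x) {ε lam : ℝ} {w : SobTriple N (ENNReal.ofReal p)}
    (hw : IsCriticalV N p hp.le Ω V ε lam w) {φ : EucN N → ℝ} {γ : EucN N → EucN N}
    (hφ : MemW10V hp.le Ω V φ γ) :
    (∫ x, ‖w.2.1 x‖ ^ (p - 2) * ⟪w.2.1 x, γ x⟫)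
      + ε * ∫ x, V x * |w.1 x| ^ (p - 2) * (w.1 x) * φ x
    = lam * ∫ x, |w.1 x| ^ (p - 2) * (w.1 x) * φ x := by
  have := fact_one_le_ofReal hp.le
  have hu := memW10V_of_mem_W10V hV hw.1
  obtain ⟨T₁, hT₁⟩ := exists_clm_eq_integral_norm_rpow_mul_inner hp hu.memLp
  obtain ⟨T₂, hT₂⟩ := exists_clm_eq_integral_norm_rpow_mul_inner hp hu.memLp_gradient
  obtain ⟨T₃, hT₃⟩ := exists_clm_eq_integral_norm_rpow_mul_inner hp hu.memLp_potential
  have pairings {v : SobTriple N (ENNReal.ofReal p)} {f : EucN N → ℝ} {g : EucN N → EucN N}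
      (hf : v.1 =ᵐ[volume] f) (hg : v.2.1 =ᵐ[volume] g)
      (hVf : v.2.2 =ᵐ[volume] fun x => V x ^ (1 / p) * f x) :
      T₁ v.1 = (∫ x, |w.1 x| ^ (p - 2) * (w.1 x) * f x) ∧
      T₂ v.2.1 = (∫ x, ‖w.2.1 x‖ ^ (p - 2) * ⟪w.2.1 x, g x⟫) ∧
      T₃ v.2.2 = ∫ x, V x * |w.1 x| ^ (p - 2) * (w.1 x) * f x := by
    rw [hT₁, hT₂, hT₃]
    refine ⟨integral_congr_ae ?_, integral_congr_ae ?_, integral_congr_ae ?_⟩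
    · filter_upwards [hf] with x hx
      rw [hx, abs_rpow_mul_mul_eq_norm_rpow_mul_inner]
    · filter_upwards [hg] with x hx
      rw [hx]
    · filter_upwards [hVf, hV0] with x hx hVx
      rw [hx, norm_rpow_mul_inner_potential (by linarith) hVx]
  have heq : W10V N p hp.le Ω V ⊆ {v | T₂ v.2.1 + ε * T₃ v.2.2 = lam * T₁ v.1} := by
    refine closure_minimal ?_ (isClosed_eq (by fun_prop) (by fun_prop))
    rintro v ⟨ψ, hψ, hf, hg, hVf⟩
    obtain ⟨h₁, h₂, h₃⟩ := pairings hf hg hVf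
    rw [mem_ofPred_eq, h₁, h₂, h₃]
    exact hw.2.2 ψ hψ
  obtain ⟨v, hv, hf, hg, hVf⟩ := hφ
  obtain ⟨h₁, h₂, h₃⟩ := pairings hf hg hVf
  rw [← h₁, ← h₂, ← h₃]
  exact heq hv

/-- `u`, with gradient `g`, satisfies `-Δ_p u ≤ Λ |u|^{p-2} u` weakly where `u ≥ 0` and the
reverse inequality where `u ≤ 0`: the inequality is only tested against functions with the sign
of `u`. This is what survives of the eigenvalue equation of `-Δ_p + ε V` once the potential term
is dropped, and it is uniform in `ε`. -/
def IsSignedSubsolution (hp : 1 ≤ p) (Ω : Set (EucN N)) (V : EucN N → ℝ) (Λ : ℝ)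
    (u : EucN N → ℝ) (g : EucN N → EucN N) : Prop :=
  MemW10V hp Ω V u g ∧ ∀ φ γ, MemW10V hp Ω V φ γ → (∀ x, 0 ≤ u x * φ x) →
    ∫ x, ‖g x‖ ^ (p - 2) * ⟪g x, γ x⟫ ≤ Λ * ∫ x, |u x| ^ (p - 2) * u x * φ x

lemma IsCriticalV.isSignedSubsolution (hp : 1 < p) (hV : AEStronglyMeasurable V)
    (hV0 : ∀ᵐ x, 0 ≤ V x) {ε lam Λ : ℝ} (hε : 0 ≤ ε) (hlam : lam ≤ Λ)
    {w : SobTriple N (ENNReal.ofReal p)} (hw : IsCriticalV N p hp.le Ω V ε lam w) :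
    IsSignedSubsolution hp.le Ω V Λ w.1 w.2.1 := by
  refine ⟨memW10V_of_mem_W10V hV hw.1, fun φ γ hφ hsign => ?_⟩
  have hsign' (x) : 0 ≤ |w.1 x| ^ (p - 2) * w.1 x * φ x := by
    rw [mul_assoc]
    exact mul_nonneg (by positivity) (hsign x)
  have hpot : 0 ≤ ε * ∫ x, V x * |w.1 x| ^ (p - 2) * w.1 x * φ x := by
    refine mul_nonneg hε (integral_nonneg_of_ae ?_)
    filter_upwards [hV0] with x hx
    simpa only [Pi.zero_apply, mul_assoc] using mul_nonneg hx (hsign' x)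
  calc ∫ x, ‖w.2.1 x‖ ^ (p - 2) * ⟪w.2.1 x, γ x⟫
      ≤ lam * ∫ x, |w.1 x| ^ (p - 2) * w.1 x * φ x := by
        linarith [hw.weak_equation hp hV hV0 hφ]
    _ ≤ Λ * ∫ x, |w.1 x| ^ (p - 2) * w.1 x * φ x :=
        mul_le_mul_of_nonneg_right hlam (integral_nonneg hsign')

end WeakEquation

section RadialCutoff

variable {E : Type*} [NormedAddCommGroup E]

/-- The Japanese bracket `√(1 + ‖x‖²)`, a smooth `1`-Lipschitz substitute for the norm. -/
def japaneseBracket (x : E) : ℝ := √(1 + ‖x‖ ^ 2)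

lemma norm_le_japaneseBracket (x : E) : ‖x‖ ≤ japaneseBracket x :=
  Real.le_sqrt_of_sq_le (by linarith)

lemma japaneseBracket_pos (x : E) : 0 < japaneseBracket x :=
  Real.sqrt_pos.2 (by positivity)

lemma japaneseBracket_le (x : E) : japaneseBracket x ≤ 1 + ‖x‖ :=
  sqrt_one_add_norm_sq_le x

lemma lipschitzWith_japaneseBracket : LipschitzWith 1 (japaneseBracket : E → ℝ) := by
  have hnorm (t : ℝ) (x : E) : ‖WithLp.toLp 2 (t, x)‖ = √(t ^ 2 + ‖x‖ ^ 2) := by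
    simp [WithLp.prod_norm_eq_of_L2]
  refine LipschitzWith.of_le_add fun x y => ?_
  have hdist : dist x y = ‖WithLp.toLp 2 ((1 : ℝ), x) - WithLp.toLp 2 ((1 : ℝ), y)‖ := by
    rw [← WithLp.toLp_sub, Prod.mk_sub_mk, sub_self, hnorm, dist_eq_norm]
    simp only [ne_eq, OfNat.ofNat_ne_zero, not_false_eq_true, zero_pow, zero_add, norm_nonneg,
      Real.sqrt_sq]
  have h := norm_le_norm_add_norm_sub' (WithLp.toLp 2 ((1 : ℝ), x)) (WithLp.toLp 2 ((1 : ℝ), y))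
  rwa [← hdist, hnorm, hnorm, one_pow] at h

lemma continuous_japaneseBracket : Continuous (japaneseBracket : E → ℝ) :=
  lipschitzWith_japaneseBracket.continuous

lemma exists_abs_deriv_smoothTransition_le :
    ∃ c : ℝ, 0 < c ∧ ∀ t, |deriv Real.smoothTransition t| ≤ c := by
  have hcont : Continuous (deriv Real.smoothTransition) :=
    (Real.smoothTransition.contDiff (n := 1)).continuous_deriv le_rfl
  obtain ⟨c, hc⟩ :=
    (isCompact_Icc (a := (0 : ℝ)) (b := 1)).exists_bound_of_continuousOn hcont.continuousOn
  refine ⟨max c 1, by positivity, fun t => ?_⟩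
  by_cases ht : t ∈ Icc 0 1
  · exact (hc t ht).trans (le_max_left _ _)
  suffices deriv Real.smoothTransition t = 0 by rw [this, abs_zero]; positivity
  rcases not_and_or.1 ht with ht | ht
  · refine IsLocalMin.deriv_eq_zero (Eventually.of_forall fun s => ?_)
    rw [Real.smoothTransition.zero_of_nonpos (not_le.1 ht).le]
    exact Real.smoothTransition.nonneg s
  · refine IsLocalMax.deriv_eq_zero (Eventually.of_forall fun s => ?_)
    rw [Real.smoothTransition.one_of_one_le (not_le.1 ht).le]
    exact Real.smoothTransition.le_one s

lemma exists_abs_deriv_smoothTransition_pow_le {p : ℝ} (hp : 1 < p) :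
    ∃ c : ℝ, 0 < c ∧ ∀ t, |deriv (fun s => Real.smoothTransition s ^ ⌈p⌉₊) t| ≤
      c * (Real.smoothTransition t ^ ⌈p⌉₊) ^ ((p - 1) / p) := by
  obtain ⟨c, hc, hderiv⟩ := exists_abs_deriv_smoothTransition_le
  have hp0 : 0 < p := by linarith
  have hm : 1 < ⌈p⌉₊ := Nat.lt_ceil.2 (by exact_mod_cast hp)
  refine ⟨⌈p⌉₊ * c, by positivity, fun t => ?_⟩
  have hS := Real.smoothTransition.nonneg t
  have hpow : Real.smoothTransition t ^ (⌈p⌉₊ - 1) ≤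
      (Real.smoothTransition t ^ ⌈p⌉₊) ^ ((p - 1) / p) := by
    rw [← Real.rpow_natCast, ← Real.rpow_natCast, ← Real.rpow_mul hS]
    refine Real.rpow_le_rpow_of_exponent_ge' hS (Real.smoothTransition.le_one t)
      (mul_nonneg (Nat.cast_nonneg _) (div_nonneg (by linarith) hp0.le)) ?_
    rw [Nat.cast_sub hm.le, Nat.cast_one, mul_div_assoc', div_le_iff₀ hp0]
    linarith [Nat.le_ceil p]
  have hdiff : DifferentiableAt ℝ Real.smoothTransition t :=
    (Real.smoothTransition.contDiff (n := 1)).differentiable one_ne_zero t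
  rw [deriv_fun_pow hdiff, abs_mul, abs_of_nonneg (by positivity)]
  calc ⌈p⌉₊ * Real.smoothTransition t ^ (⌈p⌉₊ - 1) * |deriv Real.smoothTransition t|
      ≤ ⌈p⌉₊ * (Real.smoothTransition t ^ ⌈p⌉₊) ^ ((p - 1) / p) * c := by
        gcongr
        exact hderiv t
    _ = ⌈p⌉₊ * c * (Real.smoothTransition t ^ ⌈p⌉₊) ^ ((p - 1) / p) := by ring

/-- A smooth radial cutoff that vanishes for `japaneseBracket x ≤ r` and equals `1` for
`r + 1 / κ ≤ japaneseBracket x`. The power `⌈p⌉₊` makes its gradient bounded by a multiple of its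
own power `(p - 1) / p`, as required by Young's inequality with exponent `p`. -/
def radialCutoff (p r κ : ℝ) (x : E) : ℝ :=
  Real.smoothTransition (κ * (japaneseBracket x - r)) ^ ⌈p⌉₊

variable {p r κ : ℝ}

lemma radialCutoff_mem_Icc (x : E) : radialCutoff p r κ x ∈ Icc 0 1 :=
  ⟨pow_nonneg (Real.smoothTransition.nonneg _) _,
    pow_le_one₀ (Real.smoothTransition.nonneg _) (Real.smoothTransition.le_one _)⟩

lemma radialCutoff_of_le (hp : 0 < p) (hκ : 0 ≤ κ) {x : E} (hx : japaneseBracket x ≤ r) :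
    radialCutoff p r κ x = 0 := by
  rw [radialCutoff, Real.smoothTransition.zero_of_nonpos
    (mul_nonpos_of_nonneg_of_nonpos hκ (sub_nonpos.2 hx)), zero_pow (Nat.ceil_pos.2 hp).ne']

lemma radialCutoff_of_add_le (hκ : 0 < κ) {x : E} (hx : r + 1 / κ ≤ japaneseBracket x) :
    radialCutoff p r κ x = 1 := by
  rw [radialCutoff, Real.smoothTransition.one_of_one_le, one_pow]
  rwa [← div_le_iff₀' hκ, le_sub_iff_add_le']

lemma tsupport_radialCutoff_subset (hp : 0 < p) (hκ : 0 ≤ κ) :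
    tsupport (radialCutoff p r κ : E → ℝ) ⊆ {x | r ≤ japaneseBracket x} := by
  refine closure_minimal (fun x hx => ?_) (isClosed_le continuous_const continuous_japaneseBracket)
  contrapose! hx
  exact Function.notMem_support.2 (radialCutoff_of_le hp hκ (not_le.1 hx).le)

/-- The annulus `r < japaneseBracket x < r + 1 / κ`, where the gradient of `radialCutoff p r κ`
lives. -/
def bracketAnnulus (E : Type*) [NormedAddCommGroup E] (r κ : ℝ) : Set E :=
  {x | r < japaneseBracket x ∧ japaneseBracket x < r + 1 / κ}

lemma isOpen_bracketAnnulus : IsOpen (bracketAnnulus E r κ) :=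
  (isOpen_lt continuous_const continuous_japaneseBracket).inter
    (isOpen_lt continuous_japaneseBracket continuous_const)

variable [InnerProductSpace ℝ E]

lemma contDiff_japaneseBracket : ContDiff ℝ (⊤ : ℕ∞) (japaneseBracket : E → ℝ) :=
  (contDiff_const.add (contDiff_norm_sq ℝ)).sqrt fun x => by positivity

lemma contDiff_radialCutoff : ContDiff ℝ (⊤ : ℕ∞) (radialCutoff p r κ : E → ℝ) :=
  (Real.smoothTransition.contDiff.comp
    (contDiff_const.mul (contDiff_japaneseBracket.sub contDiff_const))).pow _

variable [CompleteSpace E]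

lemma exists_norm_gradient_radialCutoff_le (hp : 1 < p) :
    ∃ c : ℝ, 0 < c ∧ ∀ (r κ : ℝ) (x : E), 0 ≤ κ →
      ‖gradient (radialCutoff p r κ) x‖ ≤ c * κ * radialCutoff p r κ x ^ ((p - 1) / p) := by
  obtain ⟨c, hc, hderiv⟩ := exists_abs_deriv_smoothTransition_pow_le hp
  refine ⟨c, hc, fun r κ x hκ => ?_⟩
  have hprofile : HasDerivAt (fun s => Real.smoothTransition s ^ ⌈p⌉₊) _
      (κ * (japaneseBracket x - r)) :=
    (((Real.smoothTransition.contDiff (n := 1)).pow _).differentiable one_ne_zero _).hasDerivAt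
  have harg : HasFDerivAt (fun y : E => κ * (japaneseBracket y - r))
      (κ • fderiv ℝ japaneseBracket x) x :=
    ((contDiff_japaneseBracket.differentiable (by simp) x).hasFDerivAt.sub_const r).const_mul κ
  have hcomp : (radialCutoff p r κ : E → ℝ) = (fun s => Real.smoothTransition s ^ ⌈p⌉₊) ∘
      fun y => κ * (japaneseBracket y - r) := rfl
  have hlip : ‖fderiv ℝ (japaneseBracket : E → ℝ) x‖ ≤ 1 :=
    norm_fderiv_le_of_lipschitz ℝ lipschitzWith_japaneseBracket
  rw [gradient, LinearIsometryEquiv.norm_map, hcomp, (hprofile.comp_hasFDerivAt x harg).fderiv,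
    norm_smul, norm_smul, Real.norm_of_nonneg hκ]
  have hnonneg : 0 ≤ radialCutoff p r κ x := (radialCutoff_mem_Icc x).1
  calc _ ≤ c * radialCutoff p r κ x ^ ((p - 1) / p) * (κ * 1) := by
        gcongr
        exact hderiv _
    _ = c * κ * radialCutoff p r κ x ^ ((p - 1) / p) := by ring

lemma gradient_radialCutoff_of_add_le (hκ : 0 < κ) {x : E} (hx : r + 1 / κ ≤ japaneseBracket x) :
    gradient (radialCutoff p r κ) x = 0 := by
  have hmax : IsLocalMax (radialCutoff p r κ) x := Eventually.of_forall fun y => by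
    rw [radialCutoff_of_add_le hκ hx]
    exact (radialCutoff_mem_Icc y).2
  rw [gradient, hmax.fderiv_eq_zero, map_zero]

lemma exists_norm_gradient_radialCutoff_le_indicator (hp : 1 < p) :
    ∃ c : ℝ, 0 < c ∧ ∀ (r κ : ℝ) (x : E), 0 < κ →
      ‖gradient (radialCutoff p r κ) x‖ ≤
        (bracketAnnulus E r κ).indicator (fun _ => c * κ) x *
          radialCutoff p r κ x ^ ((p - 1) / p) := by
  obtain ⟨c, hc, hgrad⟩ := exists_norm_gradient_radialCutoff_le (E := E) hp
  refine ⟨c, hc, fun r κ x hκ => ?_⟩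
  by_cases hx : x ∈ bracketAnnulus E r κ
  · rw [indicator_of_mem hx]
    exact hgrad r κ x hκ.le
  rw [indicator_of_notMem hx, zero_mul]
  rcases le_or_gt (japaneseBracket x) r with hr | hr
  · have hexp : (p - 1) / p ≠ 0 := div_ne_zero (by linarith) (by linarith)
    have h := hgrad r κ x hκ.le
    rwa [radialCutoff_of_le (by linarith) hκ.le hr, Real.zero_rpow hexp, mul_zero] at h
  · rw [gradient_radialCutoff_of_add_le hκ (not_lt.1 fun h => hx ⟨hr, h⟩), norm_zero]

end RadialCutoff

section Caccioppoli

lemma rpow_sub_one_mul_le_add {p : ℝ} (hp : 1 < p) {δ : ℝ} (hδ : 0 < δ) {a b : ℝ} (ha : 0 ≤ a)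
    (hb : 0 ≤ b) : a ^ (p - 1) * b ≤ δ * a ^ p + δ ^ (1 - p) * b ^ p := by
  have hsplit {t : ℝ} (ht : 0 ≤ t) : t ^ p = t ^ (p - 1) * t := by
    rw [← Real.rpow_add_one' ht (by linarith), sub_add_cancel]
  rcases le_or_gt b (δ * a) with hba | hba
  · calc a ^ (p - 1) * b ≤ a ^ (p - 1) * (δ * a) := by gcongr
      _ = δ * a ^ p := by rw [hsplit ha]; ring
      _ ≤ _ := le_add_of_nonneg_right (by positivity)
  · have hab : a ≤ b / δ := (le_div_iff₀' hδ).2 hba.le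
    calc a ^ (p - 1) * b ≤ (b / δ) ^ (p - 1) * b := by gcongr
      _ = δ ^ (1 - p) * b ^ p := by
        rw [Real.div_rpow hb hδ.le, hsplit hb, ← neg_sub p 1, Real.rpow_neg hδ.le]
        ring
      _ ≤ _ := le_add_of_nonneg_left (by positivity)

lemma exists_add_rpow_le {p : ℝ} (hp : 0 ≤ p) {δ : ℝ} (hδ : 0 < δ) :
    ∃ C : ℝ, 0 ≤ C ∧ ∀ a b : ℝ, 0 ≤ a → 0 ≤ b → (a + b) ^ p ≤ (1 + δ) * a ^ p + C * b ^ p := by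
  have hlim : Tendsto (fun s : ℝ => (1 + s) ^ p) (𝓝 0) (𝓝 1) := by
    have h : ContinuousAt (fun s : ℝ => (1 + s) ^ p) 0 :=
      ContinuousAt.rpow_const (by fun_prop) (Or.inr hp)
    simpa only [ContinuousAt, add_zero, Real.one_rpow] using h
  obtain ⟨s, hs, hs0⟩ := ((hlim.mono_left nhdsWithin_le_nhds).eventually
    (gt_mem_nhds (show 1 < 1 + δ by linarith))).and (self_mem_nhdsWithin (s := Ioi 0)) |>.exists
  replace hs0 : 0 < s := hs0
  refine ⟨(1 / s + 1) ^ p, by positivity, fun a b ha hb => ?_⟩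
  rcases le_or_gt b (s * a) with hba | hba
  · calc (a + b) ^ p ≤ ((1 + s) * a) ^ p := by gcongr; linarith
      _ = (1 + s) ^ p * a ^ p := Real.mul_rpow (by positivity) ha
      _ ≤ (1 + δ) * a ^ p := by gcongr
      _ ≤ _ := le_add_of_nonneg_right (by positivity)
  · have hab : a ≤ 1 / s * b := by rw [one_div, inv_mul_eq_div, le_div_iff₀' hs0]; exact hba.le
    calc (a + b) ^ p ≤ ((1 / s + 1) * b) ^ p := by gcongr; linarith
      _ = (1 / s + 1) ^ p * b ^ p := Real.mul_rpow (by positivity) hb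
      _ ≤ _ := le_add_of_nonneg_left (by positivity)

section InnerProduct

variable {E : Type*} [NormedAddCommGroup E] [InnerProductSpace ℝ E] {p : ℝ} {θ b : ℝ} {g H : E}

lemma le_norm_rpow_mul_inner_smul_add (hp : 1 < p) {δ : ℝ} (hδ : 0 < δ) (hθ : 0 ≤ θ)
    (hb : 0 ≤ b) (hH : ‖H‖ ≤ b * θ ^ ((p - 1) / p)) :
    (1 - δ) * (θ * ‖g‖ ^ p) - δ ^ (1 - p) * b ^ p ≤ ‖g‖ ^ (p - 2) * ⟪g, θ • g + H⟫ := by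
  have hp0 : 0 < p := by linarith
  have hg : ‖g‖ ^ (p - 2) * ⟪g, g⟫ = ‖g‖ ^ p := by
    rw [real_inner_self_eq_norm_sq, ← Real.rpow_two,
      ← Real.rpow_add' (norm_nonneg g) (by linarith), sub_add_cancel]
  have hroot : (θ ^ (1 / p) * ‖g‖) ^ p = θ * ‖g‖ ^ p := by
    rw [Real.mul_rpow (by positivity) (norm_nonneg g), ← Real.rpow_mul hθ,
      one_div_mul_cancel hp0.ne', Real.rpow_one]
  have hcross : |‖g‖ ^ (p - 2) * ⟪g, H⟫| ≤ δ * (θ * ‖g‖ ^ p) + δ ^ (1 - p) * b ^ p :=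
    calc |‖g‖ ^ (p - 2) * ⟪g, H⟫| ≤ ‖g‖ ^ (p - 1) * ‖H‖ := abs_norm_rpow_mul_inner_le hp g H
      _ ≤ ‖g‖ ^ (p - 1) * (b * θ ^ ((p - 1) / p)) := by gcongr
      _ = (θ ^ (1 / p) * ‖g‖) ^ (p - 1) * b := by
        rw [Real.mul_rpow (by positivity) (norm_nonneg g), ← Real.rpow_mul hθ,
          one_div_mul_eq_div]
        ring
      _ ≤ δ * (θ ^ (1 / p) * ‖g‖) ^ p + δ ^ (1 - p) * b ^ p :=
        rpow_sub_one_mul_le_add hp hδ (by positivity) hb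
      _ = _ := by rw [hroot]
  rw [inner_add_right, real_inner_smul_right, mul_add, mul_left_comm (‖g‖ ^ (p - 2)) θ, hg]
  linarith [neg_le_of_abs_le hcross]

lemma norm_smul_add_rpow_le (hp : 1 < p) {δ C : ℝ} (hδ : 0 ≤ δ)
    (hC : ∀ a b : ℝ, 0 ≤ a → 0 ≤ b → (a + b) ^ p ≤ (1 + δ) * a ^ p + C * b ^ p)
    (hθ : θ ∈ Icc 0 1) (hb : 0 ≤ b) (hH : ‖H‖ ≤ b * θ ^ ((p - 1) / p)) :
    ‖θ • g + H‖ ^ p ≤ (1 + δ) * (θ * ‖g‖ ^ p) + C * b ^ p := by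
  obtain ⟨hθ0, hθ1⟩ := hθ
  have hHb : ‖H‖ ≤ b := hH.trans <| mul_le_of_le_one_right hb <|
    Real.rpow_le_one hθ0 hθ1 (div_nonneg (by linarith) (by linarith))
  have hθp : θ ^ p ≤ θ := by
    simpa only [Real.rpow_one] using
      Real.rpow_le_rpow_of_exponent_ge' hθ0 hθ1 zero_le_one hp.le
  calc ‖θ • g + H‖ ^ p ≤ (θ * ‖g‖ + b) ^ p := by
        gcongr
        refine (norm_add_le _ _).trans (add_le_add ?_ hHb)
        rw [norm_smul, Real.norm_of_nonneg hθ0]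
    _ ≤ (1 + δ) * (θ * ‖g‖) ^ p + C * b ^ p := hC _ _ (by positivity) hb
    _ ≤ (1 + δ) * (θ * ‖g‖ ^ p) + C * b ^ p := by
        rw [Real.mul_rpow hθ0 (norm_nonneg g)]
        gcongr

/-- With `δ` chosen so that `1 + δ = (1 + τ) (1 - δ)`, the term `θ ‖g‖ ^ p` cancels between the
upper bound on the left-hand side and the lower bound on the pairing. -/
lemma exists_norm_smul_add_rpow_le (hp : 1 < p) {τ : ℝ} (hτ : 0 < τ) :
    ∃ C : ℝ, 0 ≤ C ∧ ∀ {θ b : ℝ} {g H : E}, θ ∈ Icc 0 1 → 0 ≤ b →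
      ‖H‖ ≤ b * θ ^ ((p - 1) / p) →
      ‖θ • g + H‖ ^ p ≤ (1 + τ) * (‖g‖ ^ (p - 2) * ⟪g, θ • g + H⟫) + C * b ^ p := by
  obtain ⟨δ, hδ, hδτ⟩ : ∃ δ : ℝ, 0 < δ ∧ 1 + δ = (1 + τ) * (1 - δ) :=
    ⟨τ / (2 + τ), by positivity, by field_simp; ring⟩
  obtain ⟨C, hC, hadd⟩ := exists_add_rpow_le (p := p) (by linarith) hδ
  refine ⟨(1 + τ) * δ ^ (1 - p) + C, by positivity, fun {θ b g H} hθ hb hH => ?_⟩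
  have hlower := le_norm_rpow_mul_inner_smul_add (g := g) hp hδ hθ.1 hb hH
  have hupper := norm_smul_add_rpow_le (g := g) hp hδ.le hadd hθ hb hH
  linear_combination hupper + (1 + τ) * hlower + θ * ‖g‖ ^ p * hδτ

end InnerProduct

variable {N : ℕ} {p : ℝ} {Ω Ω' : Set (EucN N)} {V : EucN N → ℝ}

lemma MemW10V.softThreshold_mul_radialCutoff {u : EucN N → ℝ} {g : EucN N → EucN N} {hp : 1 ≤ p}
    (h : MemW10V hp Ω V u g) (hp1 : 1 < p) (hV : LocallyIntegrable V) (hV0 : ∀ᵐ x, 0 ≤ V x)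
    (k : ℝ) {r κ : ℝ} (hκ : 0 < κ)
    (hsupp : ∀ x ∈ Ω, r ≤ japaneseBracket x → x ∈ Ω') :
    MemW10V hp Ω' V (fun x => softThreshold k (u x) * radialCutoff p r κ x)
      (fun x => (softThresholdDeriv k (u x) * radialCutoff p r κ x) • g x +
        softThreshold k (u x) • gradient (radialCutoff p r κ) x) := by
  obtain ⟨c, hc, hgrad⟩ := exists_norm_gradient_radialCutoff_le (E := EucN N) hp1
  have hle_one (x : EucN N) : radialCutoff p r κ x ^ ((p - 1) / p) ≤ 1 :=
    Real.rpow_le_one (radialCutoff_mem_Icc x).1 (radialCutoff_mem_Icc x).2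
      (div_nonneg (by linarith) (by linarith))
  refine h.softThreshold_mul hV hV0 k (B := max 1 (c * κ)) contDiff_radialCutoff
    (fun x => ?_) (fun x => ?_)
    fun x hx hxη => hsupp x hx (tsupport_radialCutoff_subset (by linarith) hκ.le hxη)
  · rw [abs_of_nonneg (radialCutoff_mem_Icc x).1]
    exact (radialCutoff_mem_Icc x).2.trans (le_max_left _ _)
  · exact ((hgrad r κ x hκ.le).trans
      (mul_le_of_le_one_right (by positivity) (hle_one x))).trans (le_max_right _ _)

lemma abs_rpow_mul_mul_softThreshold (hp : 1 < p) {k : ℝ} (hk : 0 ≤ k) (t : ℝ) :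
    |t| ^ (p - 2) * t * softThreshold k t = |t| ^ (p - 1) * |softThreshold k t| := by
  rcases eq_or_ne t 0 with rfl | ht
  · simp [Real.zero_rpow (sub_pos.2 hp).ne']
  · rw [mul_assoc, ← abs_of_nonneg (mul_softThreshold_nonneg hk t), abs_mul, ← mul_assoc,
      ← Real.rpow_add_one (abs_ne_zero.2 ht)]
    ring_nf

lemma norm_softThreshold_smul_le {E : Type*} [NormedAddCommGroup E] [NormedSpace ℝ E] {k : ℝ}
    (hk : 0 ≤ k) (t : ℝ) {a e q : ℝ} {G : E} (hG : ‖G‖ ≤ a * e ^ q) :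
    ‖softThreshold k t • G‖ ≤
      a * |softThreshold k t| * (softThresholdDeriv k t * e) ^ q := by
  rcases le_or_gt |t| k with ht | ht
  · have hzero : softThreshold k t = 0 := by
      rw [← abs_eq_zero, abs_softThreshold hk, max_eq_right (sub_nonpos.2 ht)]
    simp only [hzero, zero_smul, norm_zero, abs_zero, mul_zero, zero_mul, le_refl]
  · rw [softThresholdDeriv_of_abs_lt hk ht, one_mul, norm_smul, Real.norm_eq_abs]
    calc |softThreshold k t| * ‖G‖ ≤ |softThreshold k t| * (a * e ^ q) := by gcongr
      _ = _ := by ring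

lemma MemW10V.memLp_softThreshold {u : EucN N → ℝ} {g : EucN N → EucN N} {hp : 1 ≤ p}
    (h : MemW10V hp Ω V u g) {k : ℝ} (hk : 0 ≤ k) :
    MemLp (fun x => softThreshold k (u x)) (ENNReal.ofReal p) :=
  have hcont : Continuous (softThreshold k) := by unfold softThreshold; fun_prop
  h.memLp.mono (hcont.comp_aestronglyMeasurable h.memLp.1)
    (Eventually.of_forall fun x => abs_softThreshold_le hk (u x))

lemma exists_norm_gradient_truncation_rpow_le {E : Type*} [NormedAddCommGroup E]
    [InnerProductSpace ℝ E] [FiniteDimensional ℝ E] (hp : 1 < p) {τ : ℝ} (hτ : 0 < τ) :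
    ∃ C : ℝ, 0 ≤ C ∧ ∀ {k r κ : ℝ}, 0 ≤ k → 0 < κ → ∀ (t : ℝ) (x g : E),
      let γ := (softThresholdDeriv k t * radialCutoff p r κ x) • g +
        softThreshold k t • gradient (radialCutoff p r κ) x
      ‖γ‖ ^ p ≤ (1 + τ) * (‖g‖ ^ (p - 2) * ⟪g, γ⟫) +
        (bracketAnnulus E r κ).indicator (fun _ => C * κ ^ p * |softThreshold k t| ^ p) x := by
  obtain ⟨c, hc, hgrad⟩ := exists_norm_gradient_radialCutoff_le_indicator (E := E) hp
  obtain ⟨C, hC, hpoint⟩ := exists_norm_smul_add_rpow_le (E := E) hp hτ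
  refine ⟨C * c ^ p, by positivity, fun {k r κ} hk hκ t x g => ?_⟩
  have hθ : softThresholdDeriv k t * radialCutoff p r κ x ∈ Icc 0 1 :=
    unitInterval.mul_mem (softThresholdDeriv_mem_Icc hk t) (radialCutoff_mem_Icc x)
  have hind : 0 ≤ (bracketAnnulus E r κ).indicator (fun _ => c * κ) x :=
    indicator_nonneg (fun _ _ => by positivity) x
  refine (hpoint hθ (mul_nonneg hind (abs_nonneg _))
    (norm_softThreshold_smul_le hk t (hgrad r κ x hκ))).trans_eq ?_
  congr 1
  by_cases hx : x ∈ bracketAnnulus E r κ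
  · rw [indicator_of_mem hx, indicator_of_mem hx, Real.mul_rpow (by positivity) (abs_nonneg _),
      Real.mul_rpow hc.le hκ.le]
    ring
  · rw [indicator_of_notMem hx, indicator_of_notMem hx, zero_mul, Real.zero_rpow (by linarith),
      mul_zero]

/-- The equation is tested against `softThreshold k u * η`, where `η` is a radial cutoff. -/
lemma exists_caccioppoli (hp : 1 < p) (hV : LocallyIntegrable V) (hV0 : ∀ᵐ x, 0 ≤ V x) {τ : ℝ}
    (hτ : 0 < τ) :
    ∃ C : ℝ, 0 ≤ C ∧ ∀ {Λ : ℝ} {u : EucN N → ℝ} {g : EucN N → EucN N},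
      IsSignedSubsolution hp.le Ω V Λ u g → ∀ {k r κ : ℝ}, 0 ≤ k → 0 < κ →
      ∫ x, ‖(softThresholdDeriv k (u x) * radialCutoff p r κ x) • g x +
          softThreshold k (u x) • gradient (radialCutoff p r κ) x‖ ^ p ≤
        (1 + τ) * (Λ * ∫ x, |u x| ^ (p - 1) * |softThreshold k (u x)| * radialCutoff p r κ x) +
          C * κ ^ p * ∫ x in bracketAnnulus (EucN N) r κ, |softThreshold k (u x)| ^ p := by
  obtain ⟨C, hC, hpoint⟩ := exists_norm_gradient_truncation_rpow_le (E := EucN N) hp hτ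
  refine ⟨C, hC, fun {Λ u g} hu {k r κ} hk hκ => ?_⟩
  have hφ := hu.1.softThreshold_mul_radialCutoff hp hV hV0 k hκ (r := r) (Ω' := Ω)
    fun x hx _ => hx
  set γ : EucN N → EucN N := fun x => (softThresholdDeriv k (u x) * radialCutoff p r κ x) • g x +
    softThreshold k (u x) • gradient (radialCutoff p r κ) x
  set A := bracketAnnulus (EucN N) r κ
  have hA : MeasurableSet A := isOpen_bracketAnnulus.measurableSet
  have htest := hu.2 _ _ hφ fun x => by
    rw [← mul_assoc]
    exact mul_nonneg (mul_softThreshold_nonneg hk _) (radialCutoff_mem_Icc x).1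
  simp only [← mul_assoc, abs_rpow_mul_mul_softThreshold hp hk] at htest
  have hpair : Integrable fun x => (1 + τ) * (‖g x‖ ^ (p - 2) * ⟪g x, γ x⟫) :=
    (integrable_norm_rpow_mul_inner hp hu.1.memLp_gradient hφ.memLp_gradient).const_mul (1 + τ)
  have hann : Integrable (A.indicator fun x => C * κ ^ p * |softThreshold k (u x)| ^ p) :=
    ((integrable_norm_rpow_of_memLp (by linarith) (hu.1.memLp_softThreshold hk)).const_mul
      _).indicator hA
  calc ∫ x, ‖γ x‖ ^ p
      ≤ ∫ x, (1 + τ) * (‖g x‖ ^ (p - 2) * ⟪g x, γ x⟫) +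
          A.indicator (fun x => C * κ ^ p * |softThreshold k (u x)| ^ p) x :=
        integral_mono hφ.integrable_gradient_rpow (hpair.add hann)
          fun x => hpoint hk hκ (u x) x (g x)
    _ = (1 + τ) * (∫ x, ‖g x‖ ^ (p - 2) * ⟪g x, γ x⟫) +
          C * κ ^ p * ∫ x in A, |softThreshold k (u x)| ^ p := by
        rw [integral_add hpair hann, integral_const_mul, integral_indicator hA,
          integral_const_mul]
    _ ≤ _ := by gcongr

end Caccioppoli

section ExteriorIntegrals

variable {E : Type*} [NormedAddCommGroup E]

/-- The complement of a ball, measured by the smooth radial weight `japaneseBracket`. -/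
def bracketExterior (E : Type*) [NormedAddCommGroup E] (r : ℝ) : Set E :=
  {x | r < japaneseBracket x}

variable {p r s κ : ℝ}

lemma bracketExterior_subset (h : r ≤ s) : bracketExterior E s ⊆ bracketExterior E r :=
  fun _ hx => h.trans_lt hx

section Measurable

variable [MeasurableSpace E] [BorelSpace E] {μ : Measure E}

lemma measurableSet_bracketExterior : MeasurableSet (bracketExterior E r) :=
  (isOpen_lt continuous_const continuous_japaneseBracket).measurableSet

lemma setIntegral_bracketAnnulus_add_le {f : E → ℝ} (hκ : 0 < κ) (hf : Integrable f μ)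
    (hf0 : ∀ x, 0 ≤ f x) :
    ∫ x in bracketAnnulus E r κ, f x ∂μ + ∫ x in bracketExterior E (r + 1 / κ), f x ∂μ ≤
      ∫ x in bracketExterior E r, f x ∂μ := by
  have hdisj : Disjoint (bracketAnnulus E r κ) (bracketExterior E (r + 1 / κ)) :=
    Set.disjoint_left.2 fun _ hx hx' => hx.2.not_gt hx'
  have hsub : bracketAnnulus E r κ ∪ bracketExterior E (r + 1 / κ) ⊆ bracketExterior E r :=
    union_subset (fun _ hx => hx.1)
      (bracketExterior_subset (le_add_of_nonneg_right (one_div_pos.2 hκ).le))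
  rw [← setIntegral_union hdisj measurableSet_bracketExterior hf.integrableOn hf.integrableOn]
  exact setIntegral_mono_set hf.integrableOn (Eventually.of_forall hf0) hsub.eventuallyLE

lemma setIntegral_bracketExterior_le_integral_mul_radialCutoff (hκ : 0 < κ) {f : E → ℝ}
    (hf : Integrable (fun x => |f x * radialCutoff p r κ x| ^ p) μ) :
    ∫ x in bracketExterior E (r + 1 / κ), |f x| ^ p ∂μ ≤
      ∫ x, |f x * radialCutoff p r κ x| ^ p ∂μ :=
  calc ∫ x in bracketExterior E (r + 1 / κ), |f x| ^ p ∂μ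
      = ∫ x in bracketExterior E (r + 1 / κ), |f x * radialCutoff p r κ x| ^ p ∂μ :=
        setIntegral_congr_fun measurableSet_bracketExterior fun x hx => by
          simp only [radialCutoff_of_add_le hκ (le_of_lt hx), mul_one]
    _ ≤ _ := setIntegral_le_integral hf (Eventually.of_forall fun x => by positivity)

end Measurable

lemma integral_le_setIntegral_of_le {α : Type*} [MeasurableSpace α] {μ : Measure α} {A : Set α}
    {f F : α → ℝ} (hA : MeasurableSet A) (hF : IntegrableOn F A μ) (hf0 : ∀ x, 0 ≤ f x)
    (hfF : ∀ x ∈ A, f x ≤ F x) (hfA : ∀ x ∉ A, f x = 0) : ∫ x, f x ∂μ ≤ ∫ x in A, F x ∂μ := by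
  rw [← setIntegral_eq_integral_of_forall_compl_eq_zero hfA]
  exact integral_mono_of_nonneg (Eventually.of_forall hf0) hF
    ((ae_restrict_iff' hA).2 (Eventually.of_forall hfF))

end ExteriorIntegrals

section TailDecay

variable {N : ℕ} {p : ℝ} {Ω : Set (EucN N)} {V : EucN N → ℝ}

lemma softThreshold_zero (t : ℝ) : softThreshold 0 t = t := by
  simp [softThreshold]

lemma abs_rpow_sub_one_mul_abs {p : ℝ} (hp : p ≠ 0) (t : ℝ) : |t| ^ (p - 1) * |t| = |t| ^ p := by
  rw [← Real.rpow_add_one' (abs_nonneg t) (by rwa [sub_add_cancel]), sub_add_cancel]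

lemma integral_rpow_mul_radialCutoff_le (hp : 0 < p) {r κ : ℝ} (hκ : 0 ≤ κ) {u : EucN N → ℝ}
    (hu : Integrable fun x => |u x| ^ p) :
    ∫ x, |u x| ^ (p - 1) * |u x| * radialCutoff p r κ x ≤
      ∫ x in bracketExterior (EucN N) r, |u x| ^ p := by
  simp only [abs_rpow_sub_one_mul_abs hp.ne']
  refine integral_le_setIntegral_of_le measurableSet_bracketExterior hu.integrableOn
    (fun x => mul_nonneg (by positivity) (radialCutoff_mem_Icc x).1)
    (fun x _ => mul_le_of_le_one_right (by positivity) (radialCutoff_mem_Icc x).2) fun x hx => ?_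
  rw [radialCutoff_of_le hp hκ (not_lt.1 hx), mul_zero]

lemma mem_diff_closure_ball_of_lt_japaneseBracket {R r : ℝ} (hr : 1 + R < r) {x : EucN N}
    (hx : x ∈ Ω) (hxr : r ≤ japaneseBracket x) : x ∈ Ω \ closure (ball (0 : EucN N) R) := by
  refine ⟨hx, fun hcl => ?_⟩
  have hxR : ‖x‖ ≤ R := mem_closedBall_zero_iff.1 (closure_ball_subset_closedBall hcl)
  linarith [japaneseBracket_le x]

/-- Caccioppoli's inequality with `k = 0`, confronted with the Poincaré inequality outside a large
ball: both sides contain the mass of `u` near infinity, and the Poincaré constant wins. -/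
lemma exists_mul_setIntegral_bracketExterior_le (hp : 1 < p) (hV : LocallyIntegrable V)
    (hV0 : ∀ᵐ x, 0 ≤ V x) {τ : ℝ} (hτ : 0 < τ) :
    ∃ C : ℝ, 0 ≤ C ∧ ∀ {Λ L : ℝ} {u : EucN N → ℝ} {g : EucN N → EucN N}, 0 ≤ Λ → 0 ≤ L →
      IsSignedSubsolution hp.le Ω V Λ u g →
      ∀ {R : ℝ}, ENNReal.ofReal L ≤ lambda1p N p hp.le (Ω \ closure (ball (0 : EucN N) R)) →
      ∀ {r : ℝ}, 1 + R < r →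
      L * ∫ x in bracketExterior (EucN N) (r + 1), |u x| ^ p ≤
        (1 + τ) * (Λ * ∫ x in bracketExterior (EucN N) r, |u x| ^ p) +
          C * ∫ x in bracketAnnulus (EucN N) r 1, |u x| ^ p := by
  obtain ⟨C, hC, hcac⟩ := exists_caccioppoli (N := N) (Ω := Ω) hp hV hV0 hτ
  refine ⟨C, hC, fun {Λ L u g} hΛ hL hu {R} hR {r} hr => ?_⟩
  have hcut := hu.1.softThreshold_mul_radialCutoff hp hV hV0 0 one_pos (r := r)
    fun x => mem_diff_closure_ball_of_lt_japaneseBracket hr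
  have hcacc := hcac hu le_rfl one_pos (k := 0) (r := r)
  have hpoincare := hcut.mul_integral_rpow_le hR
  simp only [softThreshold_zero, Real.one_rpow, mul_one] at hcacc hpoincare
  have hint : Integrable fun x => |u x * radialCutoff p r 1 x| ^ p := by
    simpa only [softThreshold_zero] using hcut.integrable_rpow
  calc L * ∫ x in bracketExterior (EucN N) (r + 1), |u x| ^ p
      ≤ L * ∫ x, |u x * radialCutoff p r 1 x| ^ p := by
        gcongr
        simpa only [div_one] using
          setIntegral_bracketExterior_le_integral_mul_radialCutoff one_pos hint
    _ ≤ _ := hpoincare.trans hcacc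
    _ ≤ _ := by
        gcongr
        exact integral_rpow_mul_radialCutoff_le (by linarith) zero_le_one hu.1.integrable_rpow

/-- Hole filling: adding a multiple of the left-hand side of
`exists_mul_setIntegral_bracketExterior_le` turns the annulus into the whole exterior. -/
lemma exists_setIntegral_bracketExterior_add_one_le (hp : 1 < p) (hV : LocallyIntegrable V)
    (hV0 : ∀ᵐ x, 0 ≤ V x) {Λ L : ℝ} (hΛ : 0 ≤ Λ) (hL : Λ < L) :
    ∃ θ ∈ Ioo (0 : ℝ) 1, ∀ {u : EucN N → ℝ} {g : EucN N → EucN N},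
      IsSignedSubsolution hp.le Ω V Λ u g →
      ∀ {R : ℝ}, ENNReal.ofReal L ≤ lambda1p N p hp.le (Ω \ closure (ball (0 : EucN N) R)) →
      ∀ {r : ℝ}, 1 + R < r →
        ∫ x in bracketExterior (EucN N) (r + 1), |u x| ^ p ≤
          θ * ∫ x in bracketExterior (EucN N) r, |u x| ^ p := by
  obtain ⟨τ, hτ, hτL⟩ : ∃ τ : ℝ, 0 < τ ∧ (1 + τ) * Λ < L := by
    refine ⟨(L - Λ) / (Λ + 1), div_pos (by linarith) (by linarith), ?_⟩
    have : (L - Λ) / (Λ + 1) * Λ < L - Λ := by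
      rw [div_mul_eq_mul_div, div_lt_iff₀ (by linarith)]
      nlinarith
    linarith
  obtain ⟨C, hC, hfill⟩ :=
    exists_mul_setIntegral_bracketExterior_le (N := N) (Ω := Ω) hp hV hV0 hτ
  set β := L - (1 + τ) * Λ
  set D := C + (1 + τ) * Λ + 1
  have hβ : 0 < β := sub_pos.2 hτL
  have hD : 0 < D := by positivity
  have hβD : 0 < β + D := add_pos hβ hD
  refine ⟨D / (β + D), ⟨div_pos hD hβD, (div_lt_one hβD).2 (by linarith)⟩,
    fun {u g} hu {R} hR {r} hr => ?_⟩
  have hmul := hfill hΛ (hΛ.trans hL.le) hu hR hr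
  have hann := setIntegral_bracketAnnulus_add_le (r := r) one_pos hu.1.integrable_rpow
    fun x => by positivity
  rw [div_one] at hann
  set a := ∫ x in bracketExterior (EucN N) r, |u x| ^ p
  set b := ∫ x in bracketExterior (EucN N) (r + 1), |u x| ^ p
  have hba : b ≤ a := by
    have : 0 ≤ ∫ x in bracketAnnulus (EucN N) r 1, |u x| ^ p :=
      integral_nonneg fun x => by positivity
    linarith
  have hCann : C * ∫ x in bracketAnnulus (EucN N) r 1, |u x| ^ p ≤ C * (a - b) := by
    gcongr
    linarith
  rw [div_mul_eq_mul_div, le_div_iff₀ hβD]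
  linear_combination hmul + hCann + hba

end TailDecay

section ProductFunctions

variable {α β : Type*} [MeasurableSpace α] [MeasurableSpace β] {μ : Measure α} {ν : Measure β}

lemma eLpNorm_mul_prod [SFinite ν] {q : ℝ≥0∞} (hq0 : q ≠ 0) (hq : q ≠ ∞) {f : α → ℝ} {χ : β → ℝ}
    (hf : AEStronglyMeasurable f μ) (hχ : AEStronglyMeasurable χ ν) :
    eLpNorm (fun z : α × β => f z.1 * χ z.2) q (μ.prod ν) = eLpNorm f q μ * eLpNorm χ q ν := by
  simp only [eLpNorm_eq_lintegral_rpow_enorm_toReal hq0 hq]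
  rw [← ENNReal.mul_rpow_of_nonneg _ _ (by positivity),
    ← lintegral_prod_mul (hf.enorm.pow_const _) (hχ.enorm.pow_const _)]
  simp only [enorm_mul, ENNReal.mul_rpow_of_nonneg _ _ toReal_nonneg]

lemma hasCompactSupport_mul_prod {X Y : Type*} [TopologicalSpace X] [TopologicalSpace Y]
    [R1Space X] [R1Space Y] {f : X → ℝ} {χ : Y → ℝ} (hf : HasCompactSupport f)
    (hχ : HasCompactSupport χ) :
    HasCompactSupport fun z : X × Y => f z.1 * χ z.2 :=
  .of_support_subset_isCompact (hf.isCompact.prod hχ.isCompact) fun _ hz =>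
    ⟨subset_tsupport _ (left_ne_zero_of_mul hz), subset_tsupport _ (right_ne_zero_of_mul hz)⟩

variable {E F : Type*} [NormedAddCommGroup E] [NormedSpace ℝ E] [NormedAddCommGroup F]
  [NormedSpace ℝ F] {f : E → ℝ} {χ : F → ℝ}

lemma norm_fderiv_mul_prod_le {z : E × F} (hf : DifferentiableAt ℝ f z.1)
    (hχ : DifferentiableAt ℝ χ z.2) :
    ‖fderiv ℝ (fun z : E × F => f z.1 * χ z.2) z‖ ≤
      ‖fderiv ℝ f z.1‖ * ‖χ z.2‖ + ‖f z.1‖ * ‖fderiv ℝ χ z.2‖ := by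
  have hfst : HasFDerivAt (fun z : E × F => f z.1) (fderiv ℝ f z.1 ∘L .fst ℝ E F) z :=
    hf.hasFDerivAt.comp z hasFDerivAt_fst
  have hsnd : HasFDerivAt (fun z : E × F => χ z.2) (fderiv ℝ χ z.2 ∘L .snd ℝ E F) z :=
    hχ.hasFDerivAt.comp z hasFDerivAt_snd
  have hfst_le : ‖fderiv ℝ f z.1 ∘L .fst ℝ E F‖ ≤ ‖fderiv ℝ f z.1‖ :=
    (ContinuousLinearMap.opNorm_comp_le _ _).trans
      (mul_le_of_le_one_right (norm_nonneg _) (ContinuousLinearMap.norm_fst_le ..))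
  have hsnd_le : ‖fderiv ℝ χ z.2 ∘L .snd ℝ E F‖ ≤ ‖fderiv ℝ χ z.2‖ :=
    (ContinuousLinearMap.opNorm_comp_le _ _).trans
      (mul_le_of_le_one_right (norm_nonneg _) (ContinuousLinearMap.norm_snd_le ..))
  calc ‖fderiv ℝ (fun z : E × F => f z.1 * χ z.2) z‖
      ≤ ‖f z.1‖ * ‖fderiv ℝ χ z.2 ∘L .snd ℝ E F‖ +
          ‖χ z.2‖ * ‖fderiv ℝ f z.1 ∘L .fst ℝ E F‖ := by
        have hprod : fderiv ℝ (fun z : E × F => f z.1 * χ z.2) z = _ := (hfst.mul hsnd).fderiv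
        rw [hprod, ← norm_smul, ← norm_smul]
        exact norm_add_le _ _
    _ ≤ ‖f z.1‖ * ‖fderiv ℝ χ z.2‖ + ‖χ z.2‖ * ‖fderiv ℝ f z.1‖ := by gcongr
    _ = _ := by ring

variable [MeasurableSpace E] [BorelSpace E] [MeasurableSpace F]
  [BorelSpace F] [SecondCountableTopology F] {μ : Measure E} {ν : Measure F} [SFinite ν]

lemma eLpNorm_fderiv_mul_prod_le {q : ℝ≥0∞} (hq1 : 1 ≤ q) (hq : q ≠ ∞) (hf : ContDiff ℝ 1 f)
    (hχ : ContDiff ℝ 1 χ) :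
    eLpNorm (fderiv ℝ fun z : E × F => f z.1 * χ z.2) q (μ.prod ν) ≤
      eLpNorm (fderiv ℝ f) q μ * eLpNorm χ q ν + eLpNorm f q μ * eLpNorm (fderiv ℝ χ) q ν := by
  have hq0 : q ≠ 0 := (one_pos.trans_le hq1).ne'
  have hf' : Continuous fun x => ‖fderiv ℝ f x‖ := (hf.continuous_fderiv one_ne_zero).norm
  have hχ' : Continuous fun y => ‖fderiv ℝ χ y‖ := (hχ.continuous_fderiv one_ne_zero).norm
  have hfc := hf.continuous.norm
  have hχc := hχ.continuous.norm
  calc eLpNorm (fderiv ℝ fun z : E × F => f z.1 * χ z.2) q (μ.prod ν)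
      ≤ eLpNorm (fun z : E × F => ‖fderiv ℝ f z.1‖ * ‖χ z.2‖ + ‖f z.1‖ * ‖fderiv ℝ χ z.2‖) q
          (μ.prod ν) :=
        eLpNorm_mono_real fun z => norm_fderiv_mul_prod_le
          (hf.differentiable one_ne_zero z.1) (hχ.differentiable one_ne_zero z.2)
    _ ≤ eLpNorm (fun z : E × F => ‖fderiv ℝ f z.1‖ * ‖χ z.2‖) q (μ.prod ν) +
          eLpNorm (fun z : E × F => ‖f z.1‖ * ‖fderiv ℝ χ z.2‖) q (μ.prod ν) :=
        eLpNorm_add_le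
          ((hf'.comp continuous_fst).mul (hχc.comp continuous_snd)).aestronglyMeasurable
          ((hfc.comp continuous_fst).mul (hχ'.comp continuous_snd)).aestronglyMeasurable hq1
    _ = _ := by
        rw [eLpNorm_mul_prod hq0 hq hf'.aestronglyMeasurable hχc.aestronglyMeasurable,
          eLpNorm_mul_prod hq0 hq hfc.aestronglyMeasurable hχ'.aestronglyMeasurable]
        simp only [eLpNorm_norm]

end ProductFunctions

section Sobolev

variable {E F : Type*} [NormedAddCommGroup E] [NormedSpace ℝ E] [FiniteDimensional ℝ E]
  [MeasurableSpace E] [BorelSpace E] (μ : Measure E) [μ.IsAddHaarMeasure]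
  [NormedAddCommGroup F] [NormedSpace ℝ F] [FiniteDimensional ℝ F]
  [MeasurableSpace F] [BorelSpace F] (ν : Measure F) [ν.IsAddHaarMeasure]

lemma eLpNorm_mul_eLpNorm_le_of_finrank_prod {p q : NNReal} (hp : 1 ≤ p)
    (hn : 0 < Module.finrank ℝ (E × F))
    (hq : (q : ℝ)⁻¹ = (p : ℝ)⁻¹ - (Module.finrank ℝ (E × F) : ℝ)⁻¹) (hq0 : q ≠ 0)
    {f : E → ℝ} (hf : ContDiff ℝ 1 f) (hfc : HasCompactSupport f)
    {χ : F → ℝ} (hχ : ContDiff ℝ 1 χ) (hχc : HasCompactSupport χ) :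
    eLpNorm f q μ * eLpNorm χ q ν ≤ SNormLESNormFDerivOfEqConst ℝ (μ.prod ν) p *
      (eLpNorm (fderiv ℝ f) p μ * eLpNorm χ p ν + eLpNorm f p μ * eLpNorm (fderiv ℝ χ) p ν) := by
  have hU : ContDiff ℝ 1 fun z : E × F => f z.1 * χ z.2 :=
    (hf.comp contDiff_fst).mul (hχ.comp contDiff_snd)
  rw [← eLpNorm_mul_prod (by exact_mod_cast hq0) ENNReal.coe_ne_top
    hf.continuous.aestronglyMeasurable hχ.continuous.aestronglyMeasurable]
  refine (eLpNorm_le_eLpNorm_fderiv_of_eq (μ.prod ν) hU (hasCompactSupport_mul_prod hfc hχc) hp hn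
    hq).trans ?_
  gcongr
  exact eLpNorm_fderiv_mul_prod_le (by exact_mod_cast hp) ENNReal.coe_ne_top hf hχ

lemma exists_sobolev_conjugate_add {p : NNReal} (hp : 1 ≤ p) (n : ℕ) :
    ∃ m : ℕ, ∃ q : NNReal, p < q ∧ 0 < n + m ∧
      (q : ℝ)⁻¹ = (p : ℝ)⁻¹ - ((n + m : ℕ) : ℝ)⁻¹ := by
  obtain ⟨m, hm⟩ := exists_nat_gt p
  have hp0 : 0 < p := one_pos.trans_le hp
  have hnm : p < (n + m : ℕ) := hm.trans_le (by exact_mod_cast Nat.le_add_left m n)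
  have hnm0 : (0 : NNReal) < (n + m : ℕ) := hp0.trans hnm
  have hlt : ((n + m : ℕ) : NNReal)⁻¹ < p⁻¹ := (inv_lt_inv₀ hnm0 hp0).2 hnm
  refine ⟨m, (p⁻¹ - ((n + m : ℕ) : NNReal)⁻¹)⁻¹, ?_, by exact_mod_cast hnm0, ?_⟩
  · rw [lt_inv_comm₀ hp0 (tsub_pos_of_lt hlt)]
    exact tsub_lt_self (inv_pos.2 hp0) (inv_pos.2 hnm0)
  · rw [NNReal.coe_inv, inv_inv, NNReal.coe_sub hlt.le]
    push_cast
    rfl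

/-- Multiplying `f` by a fixed bump function of `m > p` additional variables reduces the claim to
the subcritical Gagliardo–Nirenberg–Sobolev inequality, whatever the dimension of `E`. -/
lemma exists_eLpNorm_le_eLpNorm_add_eLpNorm_fderiv {p : NNReal} (hp : 1 ≤ p) :
    ∃ q : NNReal, p < q ∧ ∃ C : NNReal, ∀ f : E → ℝ, ContDiff ℝ 1 f → HasCompactSupport f →
      eLpNorm f q μ ≤ C * (eLpNorm f p μ + eLpNorm (fderiv ℝ f) p μ) := by
  obtain ⟨m, q, hpq, hn, hq⟩ := exists_sobolev_conjugate_add hp (Module.finrank ℝ E)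
  have hfinrank : Module.finrank ℝ (E × EucN m) = Module.finrank ℝ E + m := by simp
  have hq0 : q ≠ 0 := (pos_of_gt hpq).ne'
  let χ : ContDiffBump (0 : EucN m) := ⟨1, 2, one_pos, one_lt_two⟩
  have hχ : ContDiff ℝ 1 χ := χ.contDiff
  have hχc : HasCompactSupport χ := χ.hasCompactSupport
  set A := eLpNorm χ q volume
  set B := eLpNorm χ p volume + eLpNorm (fderiv ℝ χ) p volume
  set S := SNormLESNormFDerivOfEqConst ℝ (μ.prod (volume : Measure (EucN m))) p
  have hA0 : A ≠ 0 := by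
    rw [Ne, eLpNorm_eq_zero_iff hχ.continuous.aestronglyMeasurable (by exact_mod_cast hq0),
      hχ.continuous.ae_eq_iff_eq volume continuous_zero]
    intro h
    simpa [χ.one_of_mem_closedBall (mem_closedBall_self χ.rIn_pos.le)] using congrFun h 0
  have hA : A ≠ ∞ := (hχ.continuous.memLp_of_hasCompactSupport hχc).2.ne
  have hB' : B ≠ ∞ := ENNReal.add_ne_top.2
    ⟨(hχ.continuous.memLp_of_hasCompactSupport hχc).2.ne,
      ((hχ.continuous_fderiv one_ne_zero).memLp_of_hasCompactSupport (hχc.fderiv ℝ)).2.ne⟩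
  refine ⟨q, hpq, (A⁻¹ * (S * B)).toNNReal, fun f hf hfc => ?_⟩
  rw [ENNReal.coe_toNNReal (ENNReal.mul_ne_top (by simpa using hA0)
    (ENNReal.mul_ne_top ENNReal.coe_ne_top hB'))]
  calc eLpNorm f q μ = A⁻¹ * (eLpNorm f q μ * A) := by
        rw [mul_comm, mul_assoc, ENNReal.mul_inv_cancel hA0 hA, mul_one]
    _ ≤ A⁻¹ * (S * (eLpNorm (fderiv ℝ f) p μ * eLpNorm χ p volume +
          eLpNorm f p μ * eLpNorm (fderiv ℝ χ) p volume)) := by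
        refine mul_le_mul_right ?_ A⁻¹
        exact eLpNorm_mul_eLpNorm_le_of_finrank_prod μ volume hp (by rwa [hfinrank])
          (by rw [hq, hfinrank]) hq0 hf hfc hχ hχc
    _ ≤ A⁻¹ * (S * (eLpNorm (fderiv ℝ f) p μ * B + eLpNorm f p μ * B)) := by
        gcongr
        exacts [le_self_add, le_add_self]
    _ = A⁻¹ * (S * B) * (eLpNorm f p μ + eLpNorm (fderiv ℝ f) p μ) := by ring

end Sobolev

section SobolevMemW10V

variable {N : ℕ} {p : ℝ} {Ω : Set (EucN N)} {V u : EucN N → ℝ} {g : EucN N → EucN N}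

lemma eLpNorm_le_eLpNorm_mul_measure_rpow {α E : Type*} [MeasurableSpace α]
    [NormedAddCommGroup E] {μ : Measure α} {q r : ℝ≥0∞} (hqr : q ≤ r) {f : α → E}
    (hf : AEStronglyMeasurable f μ) {S : Set α} (hfS : ∀ x, x ∉ S → f x = 0) :
    eLpNorm f q μ ≤ eLpNorm f r μ * μ S ^ (1 / q.toReal - 1 / r.toReal) := by
  have hsupp : Function.support f ⊆ S := fun x hx => by_contra fun hxS => hx (hfS x hxS)
  calc eLpNorm f q μ = eLpNorm f q (μ.restrict S) :=
        (eLpNorm_restrict_eq_of_support_subset hsupp).symm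
    _ ≤ eLpNorm f r (μ.restrict S) * μ.restrict S univ ^ (1 / q.toReal - 1 / r.toReal) :=
        eLpNorm_le_eLpNorm_mul_rpow_measure_univ hqr hf.restrict
    _ = _ := by rw [eLpNorm_restrict_eq_of_support_subset hsupp, Measure.restrict_apply_univ]

lemma eLpNorm_le_eLpNorm_add_eLpNorm_sub {α E : Type*} [MeasurableSpace α]
    [NormedAddCommGroup E] {μ : Measure α} {q : ℝ≥0∞} (hq : 1 ≤ q) {f₁ f₂ : α → E}
    (hf₁ : AEStronglyMeasurable f₁ μ) (hf₂ : AEStronglyMeasurable f₂ μ) :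
    eLpNorm f₁ q μ ≤ eLpNorm f₂ q μ + eLpNorm (f₁ - f₂) q μ := by
  simpa using eLpNorm_add_le hf₂ (hf₁.sub hf₂) hq

lemma exists_eLpNorm_le_of_memW10V (hp : 1 ≤ p) :
    ∃ q : ℝ, p < q ∧ ∃ C : NNReal, ∀ {u : EucN N → ℝ} {g : EucN N → EucN N},
      MemW10V hp Ω V u g → eLpNorm u (ENNReal.ofReal q) volume ≤
        C * (eLpNorm u (ENNReal.ofReal p) volume + eLpNorm g (ENNReal.ofReal p) volume) := by
  have := fact_one_le_ofReal hp
  obtain ⟨q, hpq, C, hC⟩ := exists_eLpNorm_le_eLpNorm_add_eLpNorm_fderiv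
    (volume : Measure (EucN N)) (Real.one_le_toNNReal.2 hp)
  refine ⟨q, (Real.toNNReal_lt_iff_lt_coe (by linarith)).1 hpq, C, fun {u g} h => ?_⟩
  rw [ENNReal.ofReal_coe_nnreal]
  obtain ⟨ψ, hψ, hlim, hlim_grad, -, hae⟩ := h.exists_seq
  have hbound (n : ℕ) : eLpNorm (ψ n) q volume ≤
      C * ((eLpNorm u (ENNReal.ofReal p) volume +
          eLpNorm (ψ n - u) (ENNReal.ofReal p) volume) +
        (eLpNorm g (ENNReal.ofReal p) volume +
          eLpNorm ((fun x => gradient (ψ n) x) - g) (ENNReal.ofReal p) volume)) := by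
    have hgrad : eLpNorm (fderiv ℝ (ψ n)) (ENNReal.ofReal p) volume =
        eLpNorm (fun x => gradient (ψ n) x) (ENNReal.ofReal p) volume :=
      eLpNorm_congr_norm_ae <| .of_forall fun x => by
        simp only [gradient, LinearIsometryEquiv.norm_map]
    refine (hC _ ((hψ n).1.of_le (by exact_mod_cast le_top)) (hψ n).2.1).trans ?_
    change C * (eLpNorm (ψ n) (ENNReal.ofReal p) volume +
      eLpNorm (fderiv ℝ (ψ n)) (ENNReal.ofReal p) volume) ≤ _
    rw [hgrad]
    gcongr
    · exact eLpNorm_le_eLpNorm_add_eLpNorm_sub this.out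
        ((hψ n).memLp (ENNReal.ofReal p)).1 h.memLp.1
    · exact eLpNorm_le_eLpNorm_add_eLpNorm_sub this.out
        ((hψ n).memLp_gradient (ENNReal.ofReal p)).1 h.memLp_gradient.1
  have htend := ENNReal.Tendsto.const_mul
    ((hlim.const_add (eLpNorm u (ENNReal.ofReal p) volume)).add
      (hlim_grad.const_add (eLpNorm g (ENNReal.ofReal p) volume)))
    (Or.inr (ENNReal.coe_ne_top (r := C)))
  calc eLpNorm u q volume ≤ liminf (fun n => eLpNorm (ψ n) q volume) atTop :=
        Lp.eLpNorm_lim_le_liminf_eLpNorm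
          (fun n => (hψ n).1.continuous.aestronglyMeasurable) u hae
    _ ≤ _ := liminf_le_liminf (.of_forall hbound)
    _ = _ := by rw [htend.liminf_eq, add_zero, add_zero]

lemma rpow_add_rpow_le_two_mul_add_rpow {a b s : ℝ} (ha : 0 ≤ a) (hb : 0 ≤ b) (hs : 0 ≤ s) :
    a ^ s + b ^ s ≤ 2 * (a + b) ^ s := by
  rw [two_mul]
  gcongr <;> linarith

lemma exists_integral_rpow_le_mul_measure_rpow (hp : 1 ≤ p) :
    ∃ δ > 0, ∃ K ≥ 0, ∀ {u : EucN N → ℝ} {g : EucN N → EucN N}, MemW10V hp Ω V u g →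
      ∀ {S : Set (EucN N)}, (∀ x, x ∉ S → u x = 0) → volume S ≠ ∞ →
        ∫ x, |u x| ^ p ≤
          K * ((∫ x, |u x| ^ p) + ∫ x, ‖g x‖ ^ p) * (volume S).toReal ^ (δ : ℝ) := by
  have hp0 : 0 < p := one_pos.trans_le hp
  obtain ⟨q, hpq, C, hC⟩ := exists_eLpNorm_le_of_memW10V (N := N) (Ω := Ω) (V := V) hp
  have hq0 : 0 < q := hp0.trans hpq
  refine ⟨1 - p / q, sub_pos.2 ((div_lt_one hq0).2 hpq), (2 * C : ℝ) ^ p, by positivity,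
    fun {u g} h {S} hu hS => ?_⟩
  set a := ∫ x, |u x| ^ p
  set b := ∫ x, ‖g x‖ ^ p
  set v := (volume S).toReal
  have ha0 : 0 ≤ a := integral_nonneg fun x => by positivity
  have hb0 : 0 ≤ b := integral_nonneg fun x => by positivity
  have hv0 : 0 ≤ v := ENNReal.toReal_nonneg
  have hexp : 0 ≤ 1 / p - 1 / q := sub_nonneg.2 (one_div_le_one_div_of_le hp0 hpq.le)
  have hroot : a ^ (1 / p) ≤ C * (a ^ (1 / p) + b ^ (1 / p)) * v ^ (1 / p - 1 / q) := by
    have hle := (eLpNorm_le_eLpNorm_mul_measure_rpow (ENNReal.ofReal_le_ofReal hpq.le)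
      h.memLp.1 hu).trans (mul_le_mul_left (hC h) _)
    rw [eLpNorm_ofReal_eq_integral hp0 h.memLp, eLpNorm_ofReal_eq_integral hp0 h.memLp_gradient,
      ENNReal.toReal_ofReal hp0.le, ENNReal.toReal_ofReal hq0.le, ← ENNReal.ofReal_toReal hS,
      ENNReal.ofReal_rpow_of_nonneg hv0 hexp, ← ENNReal.ofReal_coe_nnreal,
      ← ENNReal.ofReal_add (by positivity) (by positivity), ← ENNReal.ofReal_mul C.coe_nonneg,
      ← ENNReal.ofReal_mul (by positivity), ENNReal.ofReal_le_ofReal_iff (by positivity)] at hle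
    exact hle
  have hsum : a ^ (1 / p) + b ^ (1 / p) ≤ 2 * (a + b) ^ (1 / p) :=
    rpow_add_rpow_le_two_mul_add_rpow ha0 hb0 (by positivity)
  calc a = (a ^ (1 / p)) ^ p := by
        rw [← Real.rpow_mul ha0, one_div_mul_cancel hp0.ne', Real.rpow_one]
    _ ≤ (C * (2 * (a + b) ^ (1 / p)) * v ^ (1 / p - 1 / q)) ^ p := by
        gcongr
        exact hroot.trans (by gcongr)
    _ = (2 * C * (a + b) ^ (1 / p) * v ^ (1 / p - 1 / q)) ^ p := by ring_nf
    _ = (2 * C) ^ p * (a + b) * v ^ (1 - p / q) := by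
        rw [Real.mul_rpow (by positivity) (by positivity), Real.mul_rpow (by positivity)
          (by positivity), ← Real.rpow_mul (by positivity), ← Real.rpow_mul hv0,
          one_div_mul_cancel hp0.ne', Real.rpow_one]
        congr 2
        field_simp

end SobolevMemW10V

section FastGeometricDecay

/-- The iteration starts below the unstable fixed point of `D ↦ K * B ^ j * D ^ (1 + δ)`, so the
superlinear power wins over the geometric growth of the constants. -/
lemma tendsto_zero_of_le_geometric_mul_rpow {D : ℕ → ℝ} {δ K B : ℝ} (hD : ∀ j, 0 ≤ D j)
    (hδ : 0 < δ) (hK : 0 ≤ K) (hB : 1 < B) (h0 : K * B ^ (1 / δ) * D 0 ^ δ ≤ 1)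
    (hstep : ∀ j, D (j + 1) ≤ K * B ^ j * D j ^ (1 + δ)) : Tendsto D atTop (𝓝 0) := by
  have hB0 : 0 < B := one_pos.trans hB
  set τ := (B ^ (1 / δ))⁻¹ with hτ
  have hτ0 : 0 < τ := by positivity
  have hτ1 : τ < 1 := inv_lt_one_of_one_lt₀ (Real.one_lt_rpow hB (by positivity))
  have hBτ : B * τ ^ δ = 1 := by
    rw [hτ, Real.inv_rpow (by positivity), ← Real.rpow_mul hB0.le, one_div_mul_cancel hδ.ne',
      Real.rpow_one, mul_inv_cancel₀ hB0.ne']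
  have hKτ : K * D 0 ^ δ ≤ τ := by
    rw [hτ, ← one_div, le_div_iff₀ (by positivity)]
    linarith
  have hD0 := hD 0
  have hgeom (j : ℕ) : D j ≤ D 0 * τ ^ j := by
    induction j with
    | zero => simp
    | succ j ih =>
      calc D (j + 1) ≤ K * B ^ j * D j ^ (1 + δ) := hstep j
        _ ≤ K * B ^ j * (D 0 * τ ^ j) ^ (1 + δ) := by
            have hDj := hD j
            gcongr
        _ = D 0 * τ ^ j * (K * D 0 ^ δ) * (B ^ j * (τ ^ j) ^ δ) := by
            rw [Real.rpow_one_add' (by positivity) (by positivity),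
              Real.mul_rpow hD0 (by positivity)]
            ring
        _ = D 0 * τ ^ j * (K * D 0 ^ δ) := by
            rw [← Real.rpow_natCast_mul hτ0.le, mul_comm (j : ℝ), Real.rpow_mul_natCast hτ0.le,
              ← mul_pow, hBτ, one_pow, mul_one]
        _ ≤ D 0 * τ ^ j * τ := by gcongr
        _ = D 0 * τ ^ (j + 1) := by ring
  refine squeeze_zero hD hgeom ?_
  simpa using (tendsto_pow_atTop_nhds_zero_of_lt_one hτ0.le hτ1).const_mul (D 0)

end FastGeometricDecay

section Chebyshev

variable {α : Type*} [MeasurableSpace α] {μ : Measure α} {A : Set α} {f : α → ℝ} {p a : ℝ}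

lemma measure_le_abs_inter_ne_top (hp : 0 ≤ p) (ha : 0 < a) (hA : MeasurableSet A)
    (hf : IntegrableOn (fun x => |f x| ^ p) A μ) : μ ({x | a ≤ |f x|} ∩ A) ≠ ∞ := by
  rw [← Measure.restrict_apply' hA]
  exact ((measure_mono fun x (hx : a ≤ |f x|) =>
    Real.rpow_le_rpow ha.le hx hp).trans_lt (hf.measure_ge_lt_top (Real.rpow_pos_of_pos ha p))).ne

lemma rpow_mul_measureReal_le_abs_inter (hp : 0 < p) (ha : 0 ≤ a) (hA : MeasurableSet A)
    (hf : IntegrableOn (fun x => |f x| ^ p) A μ) :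
    a ^ p * μ.real ({x | a ≤ |f x|} ∩ A) ≤ ∫ x in A, |f x| ^ p ∂μ := by
  have hlevel : {x | a ≤ |f x|} = {x | a ^ p ≤ |f x| ^ p} :=
    Set.ext fun x => (Real.rpow_le_rpow_iff ha (abs_nonneg _) hp).symm
  rw [hlevel, ← measureReal_restrict_apply' hA]
  exact mul_meas_ge_le_integral_of_nonneg (.of_forall fun x => by positivity) hf _

lemma measureReal_div_le_abs_inter_le (hp : 0 < p) (ha : 0 < a) {b : ℝ} (hb : 0 < b)
    (hA : MeasurableSet A) (hf : IntegrableOn (fun x => |f x| ^ p) A μ) :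
    μ.real ({x | a / b ≤ |f x|} ∩ A) ≤ b ^ p * ((∫ x in A, |f x| ^ p ∂μ) / a ^ p) := by
  have hle := rpow_mul_measureReal_le_abs_inter hp (div_pos ha hb).le hA hf
  rw [Real.div_rpow ha.le hb.le, div_mul_eq_mul_div, div_le_iff₀' (by positivity)] at hle
  rwa [← mul_div_assoc, le_div_iff₀' (by positivity)]

end Chebyshev

section DeGiorgi

variable {N : ℕ} {p : ℝ} {Ω : Set (EucN N)} {V : EucN N → ℝ}

lemma abs_softThreshold_anti {k k' : ℝ} (hk : 0 ≤ k) (hkk' : k ≤ k') (t : ℝ) :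
    |softThreshold k' t| ≤ |softThreshold k t| := by
  rw [abs_softThreshold hk, abs_softThreshold (hk.trans hkk')]
  gcongr

lemma softThreshold_eq_zero_iff {k t : ℝ} (hk : 0 ≤ k) : softThreshold k t = 0 ↔ |t| ≤ k := by
  rw [← abs_eq_zero, abs_softThreshold hk, max_eq_right_iff, sub_nonpos]

lemma rpow_mul_abs_softThreshold_le (hp : 1 ≤ p) {k κ M : ℝ} (hk : 0 ≤ k) (hM : 0 ≤ M)
    (hκ : 1 ≤ κ) (hkM : k + M / κ ≤ M) (t : ℝ) :
    |t| ^ (p - 1) * |softThreshold (k + M / κ) t| ≤ κ ^ p * |softThreshold k t| ^ p := by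
  have hk' : 0 ≤ k + M / κ := by positivity
  rcases le_or_gt |t| (k + M / κ) with ht | ht
  · rw [(softThreshold_eq_zero_iff hk').2 ht, abs_zero, mul_zero]
    positivity
  have ht_le : |t| ≤ κ * |softThreshold k t| := by
    have hκM : κ * (M / κ) = M := mul_div_cancel₀ M (by positivity)
    rw [abs_softThreshold hk]
    refine le_trans ?_ (mul_le_mul_of_nonneg_left (le_max_left _ _) (by positivity))
    nlinarith
  calc |t| ^ (p - 1) * |softThreshold (k + M / κ) t| ≤ |t| ^ (p - 1) * |t| :=
        mul_le_mul_of_nonneg_left (abs_softThreshold_le hk' t) (by positivity)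
    _ = |t| ^ p := abs_rpow_sub_one_mul_abs (by linarith) t
    _ ≤ (κ * |softThreshold k t|) ^ p := by gcongr
    _ = κ ^ p * |softThreshold k t| ^ p := Real.mul_rpow (by positivity) (abs_nonneg _)

variable {u : EucN N → ℝ} {g : EucN N → EucN N} {k κ r M : ℝ}

lemma MemW10V.integrable_softThreshold_rpow {hp : 1 ≤ p} (h : MemW10V hp Ω V u g) (hk : 0 ≤ k) :
    Integrable fun x => |softThreshold k (u x)| ^ p :=
  integrable_norm_rpow_of_memLp (by linarith) (h.memLp_softThreshold hk)

lemma MemW10V.setIntegral_softThreshold_rpow_anti {hp : 1 ≤ p} (h : MemW10V hp Ω V u g)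
    (hk : 0 ≤ k) {k' : ℝ} (hkk' : k ≤ k') {A A' : Set (EucN N)} (hA : A' ⊆ A) :
    ∫ x in A', |softThreshold k' (u x)| ^ p ≤ ∫ x in A, |softThreshold k (u x)| ^ p :=
  calc ∫ x in A', |softThreshold k' (u x)| ^ p
      ≤ ∫ x in A', |softThreshold k (u x)| ^ p :=
        integral_mono (h.integrable_softThreshold_rpow (hk.trans hkk')).integrableOn
          (h.integrable_softThreshold_rpow hk).integrableOn fun x =>
            Real.rpow_le_rpow (abs_nonneg _) (abs_softThreshold_anti hk hkk' _) (by linarith)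
    _ ≤ _ := setIntegral_mono_set (h.integrable_softThreshold_rpow hk).integrableOn
        (.of_forall fun x => by positivity) hA.eventuallyLE

lemma MemW10V.integral_softThreshold_mul_radialCutoff_rpow_le {hp : 1 ≤ p}
    (h : MemW10V hp Ω V u g) (hk : 0 ≤ k) {k' : ℝ} (hkk' : k ≤ k') (hκ : 0 ≤ κ) :
    ∫ x, |softThreshold k' (u x) * radialCutoff p r κ x| ^ p ≤
      ∫ x in bracketExterior (EucN N) r, |softThreshold k (u x)| ^ p := by
  have hp0 : 0 < p := by linarith
  refine integral_le_setIntegral_of_le measurableSet_bracketExterior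
    (h.integrable_softThreshold_rpow hk).integrableOn (fun x => by positivity)
    (fun x _ => ?_) fun x hx => ?_
  · rw [abs_mul, abs_of_nonneg (radialCutoff_mem_Icc x).1]
    gcongr
    · exact mul_nonneg (abs_nonneg _) (radialCutoff_mem_Icc x).1
    · exact (mul_le_of_le_one_right (abs_nonneg _) (radialCutoff_mem_Icc x).2).trans
        (abs_softThreshold_anti hk hkk' _)
  · rw [radialCutoff_of_le hp0 hκ (not_lt.1 hx), mul_zero, abs_zero, Real.zero_rpow hp0.ne']

lemma MemW10V.integral_rpow_mul_softThreshold_mul_radialCutoff_le {hp : 1 ≤ p}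
    (h : MemW10V hp Ω V u g) (hk : 0 ≤ k) (hM : 0 ≤ M) (hκ : 1 ≤ κ) (hkM : k + M / κ ≤ M) :
    ∫ x, |u x| ^ (p - 1) * |softThreshold (k + M / κ) (u x)| * radialCutoff p r κ x ≤
      κ ^ p * ∫ x in bracketExterior (EucN N) r, |softThreshold k (u x)| ^ p := by
  rw [← integral_const_mul]
  refine integral_le_setIntegral_of_le measurableSet_bracketExterior
    ((h.integrable_softThreshold_rpow hk).const_mul _).integrableOn
    (fun x => mul_nonneg (by positivity) (radialCutoff_mem_Icc x).1) (fun x _ => ?_) fun x hx => ?_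
  · exact (mul_le_of_le_one_right (by positivity) (radialCutoff_mem_Icc x).2).trans
      (rpow_mul_abs_softThreshold_le hp hk hM hκ hkM (u x))
  · rw [radialCutoff_of_le (by linarith) (by linarith) (not_lt.1 hx), mul_zero]

lemma exists_integral_norm_gradient_truncation_rpow_le (hp : 1 < p) (hV : LocallyIntegrable V)
    (hV0 : ∀ᵐ x, 0 ≤ V x) {Λ : ℝ} (hΛ : 0 ≤ Λ) :
    ∃ C ≥ 0, ∀ {u : EucN N → ℝ} {g : EucN N → EucN N}, IsSignedSubsolution hp.le Ω V Λ u g →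
      ∀ {k κ r M : ℝ}, 0 ≤ k → 0 ≤ M → 1 ≤ κ → k + M / κ ≤ M →
      ∫ x, ‖(softThresholdDeriv (k + M / κ) (u x) * radialCutoff p r κ x) • g x +
          softThreshold (k + M / κ) (u x) • gradient (radialCutoff p r κ) x‖ ^ p ≤
        C * κ ^ p * ∫ x in bracketExterior (EucN N) r, |softThreshold k (u x)| ^ p := by
  obtain ⟨C, hC, hcac⟩ := exists_caccioppoli (N := N) (Ω := Ω) hp hV hV0 one_pos
  refine ⟨2 * Λ + C, by positivity, fun {u g} hu {k κ r M} hk hM hκ hkM => ?_⟩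
  have hkk' : k ≤ k + M / κ := le_add_of_nonneg_right (by positivity)
  refine (hcac hu (hk.trans hkk') (by linarith) (r := r)).trans ?_
  set A := ∫ x in bracketExterior (EucN N) r, |softThreshold k (u x)| ^ p
  calc _ ≤ (1 + 1) * (Λ * (κ ^ p * A)) + C * κ ^ p * A := by
        gcongr
        · exact hu.1.integral_rpow_mul_softThreshold_mul_radialCutoff_le hk hM hκ hkM
        · exact hu.1.setIntegral_softThreshold_rpow_anti hk hkk' fun x hx => hx.1
    _ = (2 * Λ + C) * κ ^ p * A := by ring

lemma softThreshold_mul_radialCutoff_eq_zero (hp : 0 < p) (hk : 0 ≤ k) {h : ℝ} (hh : 0 ≤ h)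
    (hκ : 0 ≤ κ) {x : EucN N}
    (hx : x ∉ {x | h ≤ |softThreshold k (u x)|} ∩ bracketExterior (EucN N) r) :
    softThreshold (k + h) (u x) * radialCutoff p r κ x = 0 := by
  by_cases hxr : x ∈ bracketExterior (EucN N) r
  · have hxk : |softThreshold k (u x)| < h := not_le.1 fun hle => hx ⟨hle, hxr⟩
    rw [abs_softThreshold hk, max_lt_iff] at hxk
    rw [(softThreshold_eq_zero_iff (by positivity)).2 (by linarith), zero_mul]
  · rw [radialCutoff_of_le hp hκ (not_lt.1 hxr), mul_zero]

lemma exists_de_giorgi_step (hp : 1 < p) (hV : LocallyIntegrable V) (hV0 : ∀ᵐ x, 0 ≤ V x) {Λ : ℝ}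
    (hΛ : 0 ≤ Λ) :
    ∃ δ > 0, ∃ K ≥ 0, ∀ {u : EucN N → ℝ} {g : EucN N → EucN N},
      IsSignedSubsolution hp.le Ω V Λ u g →
      ∀ {k κ r M : ℝ}, 0 ≤ k → 0 < M → 1 ≤ κ → k + M / κ ≤ M →
      (∫ x in bracketExterior (EucN N) (r + 1 / κ), |softThreshold (k + M / κ) (u x)| ^ p) / M ^ p ≤
        K * (κ ^ p * ((∫ x in bracketExterior (EucN N) r, |softThreshold k (u x)| ^ p) / M ^ p)) ^
          (1 + δ : ℝ) := by
  have hp0 : 0 < p := by linarith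
  obtain ⟨C, hC, hgrad⟩ :=
    exists_integral_norm_gradient_truncation_rpow_le (N := N) (Ω := Ω) hp hV hV0 hΛ
  obtain ⟨δ, hδ, K, hK, hsob⟩ :=
    exists_integral_rpow_le_mul_measure_rpow (N := N) (Ω := Ω) (V := V) hp.le
  refine ⟨δ, hδ, K * (1 + C), by positivity, fun {u g} hu {k κ r M} hk hM hκ hkM => ?_⟩
  have hκ0 : 0 < κ := one_pos.trans_le hκ
  have hκp : 1 ≤ κ ^ p := Real.one_le_rpow hκ hp0.le
  have hMκ : 0 < M / κ := by positivity
  have hcut := hu.1.softThreshold_mul_radialCutoff hp hV hV0 (k + M / κ) hκ0 (r := r) (Ω' := Ω)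
    fun x hx _ => hx
  have hint := (hu.1.integrable_softThreshold_rpow hk).integrableOn
    (s := bracketExterior (EucN N) r)
  set S := {x | M / κ ≤ |softThreshold k (u x)|} ∩ bracketExterior (EucN N) r
  have hsob' := hsob hcut
    (fun x => softThreshold_mul_radialCutoff_eq_zero hp0 hk hMκ.le hκ0.le)
    (measure_le_abs_inter_ne_top hp0.le hMκ measurableSet_bracketExterior hint)
  set A := ∫ x in bracketExterior (EucN N) r, |softThreshold k (u x)| ^ p
  have hA : 0 ≤ A := integral_nonneg fun x => by positivity
  have hvol : (volume S).toReal ≤ κ ^ p * (A / M ^ p) :=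
    measureReal_div_le_abs_inter_le hp0 hM hκ0 measurableSet_bracketExterior hint
  rw [div_le_iff₀ (by positivity)]
  calc ∫ x in bracketExterior (EucN N) (r + 1 / κ), |softThreshold (k + M / κ) (u x)| ^ p
      ≤ ∫ x, |softThreshold (k + M / κ) (u x) * radialCutoff p r κ x| ^ p :=
        setIntegral_bracketExterior_le_integral_mul_radialCutoff hκ0 hcut.integrable_rpow
    _ ≤ _ := hsob'
    _ ≤ K * (κ ^ p * A + C * κ ^ p * A) * (κ ^ p * (A / M ^ p)) ^ δ := by
        gcongr
        · exact (hu.1.integral_softThreshold_mul_radialCutoff_rpow_le hk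
            (le_add_of_nonneg_right hMκ.le) hκ0.le).trans (le_mul_of_one_le_left hA hκp)
        · exact hgrad hu hk hM.le hκ hkM
    _ = K * (1 + C) * (κ ^ p * (A / M ^ p)) ^ (1 + δ) * M ^ p := by
        rw [Real.rpow_one_add' (by positivity) (by positivity)]
        field_simp

lemma MemW10V.ae_abs_le_of_setIntegral_softThreshold_eq_zero {hp : 1 ≤ p}
    (h : MemW10V hp Ω V u g) (hk : 0 ≤ k) {A : Set (EucN N)} (hA : MeasurableSet A)
    (hzero : ∫ x in A, |softThreshold k (u x)| ^ p = 0) : ∀ᵐ x, x ∈ A → |u x| ≤ k := by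
  rw [integral_eq_zero_iff_of_nonneg (fun x => by positivity)
    (h.integrable_softThreshold_rpow hk).integrableOn, EventuallyEq, ae_restrict_iff' hA] at hzero
  filter_upwards [hzero] with x hx hxA
  rw [← softThreshold_eq_zero_iff hk, ← abs_eq_zero]
  exact (Real.rpow_eq_zero (abs_nonneg _) (by linarith)).1 (hx hxA)

/-- The normalised mass of the `j`-th truncation in De Giorgi's iteration: the levels
`M * (1 - 2⁻ʲ)` increase to `M` while the domains `bracketExterior (r + 1 - 2⁻ʲ)` shrink to
`bracketExterior (r + 1)`. -/
def deGiorgiMass (p : ℝ) (u : EucN N → ℝ) (r M : ℝ) (j : ℕ) : ℝ :=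
  (∫ x in bracketExterior (EucN N) (r + 1 - (1 / 2) ^ j),
    |softThreshold (M * (1 - (1 / 2) ^ j)) (u x)| ^ p) / M ^ p

lemma deGiorgiMass_zero :
    deGiorgiMass p u r M 0 = (∫ x in bracketExterior (EucN N) r, |u x| ^ p) / M ^ p := by
  simp only [deGiorgiMass, pow_zero, sub_self, mul_zero, softThreshold_zero, add_sub_cancel_right]

lemma exists_deGiorgiMass_succ_le (hp : 1 < p) (hV : LocallyIntegrable V) (hV0 : ∀ᵐ x, 0 ≤ V x)
    {Λ : ℝ} (hΛ : 0 ≤ Λ) :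
    ∃ δ > 0, ∃ K ≥ 0, ∃ B > 1, ∀ {u : EucN N → ℝ} {g : EucN N → EucN N},
      IsSignedSubsolution hp.le Ω V Λ u g → ∀ {r M : ℝ}, 0 < M → ∀ j : ℕ,
      deGiorgiMass p u r M (j + 1) ≤ K * B ^ j * deGiorgiMass p u r M j ^ (1 + δ : ℝ) := by
  obtain ⟨δ, hδ, K, hK, hstep⟩ := exists_de_giorgi_step (N := N) (Ω := Ω) hp hV hV0 hΛ
  set B : ℝ := 2 ^ (p * (1 + δ)) with hB
  refine ⟨δ, hδ, K * B, by positivity, B, Real.one_lt_rpow one_lt_two (by positivity),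
    fun {u g} hu {r M} hM j => ?_⟩
  have hhalf : (1 / 2 : ℝ) ^ j = (1 / 2) ^ (j + 1) + 1 / 2 ^ (j + 1) := by
    rw [one_div_pow, one_div_pow, pow_succ]
    field_simp
    norm_num
  have hlevel_succ : M * (1 - (1 / 2) ^ j) + M / 2 ^ (j + 1) = M * (1 - (1 / 2) ^ (j + 1)) := by
    rw [hhalf]
    ring
  have hr_succ : r + 1 - (1 / 2) ^ j + 1 / 2 ^ (j + 1) = r + 1 - (1 / 2) ^ (j + 1) := by
    rw [hhalf]
    ring
  have hBpow : ((2 ^ (j + 1) : ℝ) ^ p) ^ (1 + δ) = B ^ (j + 1) := by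
    rw [hB, ← Real.rpow_mul (by positivity), ← Real.rpow_natCast_mul zero_le_two, mul_comm,
      Real.rpow_mul_natCast zero_le_two]
  have hlevel : 0 ≤ M * (1 - (1 / 2) ^ j) :=
    mul_nonneg hM.le (sub_nonneg.2 (pow_le_one₀ (by norm_num) (by norm_num)))
  have h := hstep hu (r := r + 1 - (1 / 2) ^ j) hlevel hM
    (one_le_pow₀ one_le_two : (1 : ℝ) ≤ 2 ^ (j + 1))
    (by rw [hlevel_succ]; exact mul_le_of_le_one_right hM.le (sub_le_self _ (by positivity)))
  rw [hlevel_succ, hr_succ, Real.mul_rpow (by positivity) (by positivity), hBpow] at h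
  exact h.trans_eq (by rw [deGiorgiMass]; ring)

lemma MemW10V.setIntegral_softThreshold_div_le_deGiorgiMass {hp : 1 ≤ p} (h : MemW10V hp Ω V u g)
    (hM : 0 ≤ M) (j : ℕ) :
    (∫ x in bracketExterior (EucN N) (r + 1), |softThreshold M (u x)| ^ p) / M ^ p ≤
      deGiorgiMass p u r M j := by
  rw [deGiorgiMass]
  gcongr
  refine h.setIntegral_softThreshold_rpow_anti (mul_nonneg hM (sub_nonneg.2
    (pow_le_one₀ (by norm_num) (by norm_num)))) ?_ (bracketExterior_subset ?_)
  · exact mul_le_of_le_one_right hM (sub_le_self _ (by positivity))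
  · exact sub_le_self _ (by positivity)

lemma exists_ae_abs_le_of_setIntegral_bracketExterior_le (hp : 1 < p) (hV : LocallyIntegrable V)
    (hV0 : ∀ᵐ x, 0 ≤ V x) {Λ : ℝ} (hΛ : 0 ≤ Λ) :
    ∃ H ≥ 0, ∀ {u : EucN N → ℝ} {g : EucN N → EucN N}, IsSignedSubsolution hp.le Ω V Λ u g →
      ∀ {r M : ℝ}, 0 < M → H * ∫ x in bracketExterior (EucN N) r, |u x| ^ p ≤ M ^ p →
      ∀ᵐ x, x ∈ bracketExterior (EucN N) (r + 1) → |u x| ≤ M := by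
  obtain ⟨δ, hδ, K, hK, B, hB, hstep⟩ :=
    exists_deGiorgiMass_succ_le (N := N) (Ω := Ω) hp hV hV0 hΛ
  set c := K * B ^ (1 / δ)
  have hc : 0 ≤ c := by positivity
  refine ⟨c ^ (1 / δ), by positivity, fun {u g} hu {r M} hM hH => ?_⟩
  have hmass (j : ℕ) : 0 ≤ deGiorgiMass p u r M j := by
    rw [deGiorgiMass]
    positivity
  have hmass_zero : c * deGiorgiMass p u r M 0 ^ δ ≤ 1 := by
    have hle_one : c ^ (1 / δ) * deGiorgiMass p u r M 0 ≤ 1 := by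
      rw [deGiorgiMass_zero, ← mul_div_assoc, div_le_one (by positivity)]
      exact hH
    calc c * deGiorgiMass p u r M 0 ^ δ = (c ^ (1 / δ) * deGiorgiMass p u r M 0) ^ δ := by
          rw [Real.mul_rpow (by positivity) (hmass 0), ← Real.rpow_mul hc,
            one_div_mul_cancel hδ.ne', Real.rpow_one]
      _ ≤ 1 := Real.rpow_le_one (mul_nonneg (by positivity) (hmass 0)) hle_one hδ.le
  have hlim := tendsto_zero_of_le_geometric_mul_rpow hmass hδ hK hB hmass_zero (hstep hu hM)
  have hlimit_mass := ge_of_tendsto' hlim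
    (hu.1.setIntegral_softThreshold_div_le_deGiorgiMass hM.le)
  rw [div_le_iff₀ (by positivity), zero_mul] at hlimit_mass
  exact hu.1.ae_abs_le_of_setIntegral_softThreshold_eq_zero hM.le measurableSet_bracketExterior
    (hlimit_mass.antisymm (integral_nonneg fun x => by positivity))

end DeGiorgi

section MinMax

lemma exists_continuous_mem_norm_map_sub_lt {X Y : Type*} [SeminormedAddCommGroup X]
    [NormedSpace ℝ X] [AddCommGroup Y] [TopologicalSpace Y] [IsTopologicalAddGroup Y] [Module ℝ Y]
    [ContinuousSMul ℝ Y] (P : Y →ₗ[ℝ] X) {D : Set Y} (hD : Convex ℝ D) {δ : ℝ} (hδ : 0 < δ) :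
    ∃ Q : C(X, Y), ∀ w ∈ closure (P '' D), Q w ∈ D ∧ ‖P (Q w) - w‖ < δ := by
  suffices ∃ Q : C(X, Y), ∀ w, Q w ∈ {y | w ∈ closure (P '' D) → y ∈ D ∧ ‖P y - w‖ < δ} from this
  refine exists_continuous_forall_mem_convex_of_local_const (fun w => ?_) fun w => ?_
  · by_cases hw : w ∈ closure (P '' D)
    · simp only [hw, true_imp_iff, ← mem_ball_iff_norm]
      exact hD.inter ((convex_ball w δ).linear_preimage P)
    · simp only [hw, false_imp_iff]
      exact convex_univ
  · by_cases hw : w ∈ closure (P '' D)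
    · obtain ⟨_, ⟨y, hy, rfl⟩, hyw⟩ := Metric.mem_closure_iff.1 hw δ hδ
      refine ⟨y, ?_⟩
      filter_upwards [isOpen_ball.mem_nhds (mem_ball.2 hyw)] with v hv _
      exact ⟨hy, mem_ball_iff_norm'.1 hv⟩
    · exact ⟨0, mem_of_superset (isClosed_closure.isOpen_compl.mem_nhds hw) fun v hv h =>
        (hv h).elim⟩

lemma exists_odd_continuous_mem_norm_map_sub_lt {X Y : Type*} [SeminormedAddCommGroup X]
    [NormedSpace ℝ X] [AddCommGroup Y] [TopologicalSpace Y] [IsTopologicalAddGroup Y] [Module ℝ Y]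
    [ContinuousSMul ℝ Y] (P : Y →ₗ[ℝ] X) (D : Submodule ℝ Y) {δ : ℝ} (hδ : 0 < δ) :
    ∃ T : C(X, Y), (∀ w, T (-w) = -T w) ∧
      ∀ w ∈ closure (P '' D), T w ∈ D ∧ ‖P (T w) - w‖ < δ := by
  obtain ⟨Q, hQ⟩ := exists_continuous_mem_norm_map_sub_lt P D.convex hδ
  refine ⟨⟨fun w => (2⁻¹ : ℝ) • (Q w - Q (-w)), by fun_prop⟩, fun w => ?_, fun w hw => ?_⟩
  · simp only [ContinuousMap.coe_mk, neg_neg, ← smul_neg, neg_sub]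
  have hneg : -w ∈ closure (P '' D) := (D.map P).topologicalClosure.neg_mem hw
  obtain ⟨hwD, hwδ⟩ := hQ w hw
  obtain ⟨hnegD, hnegδ⟩ := hQ (-w) hneg
  refine ⟨D.smul_mem _ (D.sub_mem hwD hnegD), ?_⟩
  calc ‖P ((2⁻¹ : ℝ) • (Q w - Q (-w))) - w‖
      = ‖(2⁻¹ : ℝ) • ((P (Q w) - w) - (P (Q (-w)) - -w))‖ := by
        rw [map_smul, map_sub]
        congr 1
        module
    _ ≤ 2⁻¹ * (‖P (Q w) - w‖ + ‖P (Q (-w)) - -w‖) := by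
        rw [norm_smul, Real.norm_of_nonneg (by norm_num)]
        gcongr
        exact norm_sub_le _ _
    _ < δ := by linarith

lemma genusGE.image {Z Z' : Type*} [NormedAddCommGroup Z] [NormedAddCommGroup Z'] {A : Set Z}
    {k : ℕ} (hA : genusGE A k) {f : Z → Z'} (hf : ContinuousOn f A)
    (hodd : ∀ x ∈ A, f (-x) = -f x) : genusGE (f '' A) k := by
  rintro j ⟨h, hh, hnorm, hhodd⟩
  refine hA j ⟨h ∘ f, hh.comp hf (mapsTo_image f A), fun x hx => hnorm _ ⟨x, hx, rfl⟩,
    fun x hx => ?_⟩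
  rw [Function.comp_apply, hodd x hx, hhodd _ ⟨x, hx, rfl⟩, Function.comp_apply]

variable {N : ℕ} {p : ℝ} {Ω : Set (EucN N)} {V : EucN N → ℝ}

/-- The projection forgetting the component `V^{1/p} u` of a triple `(u, ∇u, V^{1/p} u)`. -/
def forgetPotential (N : ℕ) (q : ℝ≥0∞) : SobTriple N q →ₗ[ℝ] SobPair N q :=
  (LinearMap.fst ℝ _ _).prod (LinearMap.fst ℝ _ _ ∘ₗ LinearMap.snd ℝ _ _)

lemma W10_subset_closure_image_testTriples (hp : 1 ≤ p) (hV : LocallyIntegrable V)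
    (hV0 : ∀ᵐ x, 0 ≤ V x) : letI := fact_one_le_ofReal hp
    W10 N p hp Ω ⊆ closure (forgetPotential N (ENNReal.ofReal p) '' testTriples p Ω V) := by
  have := fact_one_le_ofReal hp
  refine closure_mono ?_
  rintro w ⟨ψ, hψ, hw₁, hw₂⟩
  have hψ₁ := hψ.memLp (ENNReal.ofReal p)
  have hψ₂ := hψ.memLp_gradient (ENNReal.ofReal p)
  have hψ₃ := hψ.memLp_potential hp hV hV0
  exact ⟨(hψ₁.toLp _, hψ₂.toLp _, hψ₃.toLp _),
    ⟨ψ, hψ, hψ₁.coeFn_toLp, hψ₂.coeFn_toLp, hψ₃.coeFn_toLp⟩,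
    Prod.ext (Lp.ext (hψ₁.coeFn_toLp.trans hw₁.symm)) (Lp.ext (hψ₂.coeFn_toLp.trans hw₂.symm))⟩

lemma exists_odd_continuous_W10_to_W10V (hp : 1 ≤ p) (hV : LocallyIntegrable V)
    (hV0 : ∀ᵐ x, 0 ≤ V x) {δ : ℝ} (hδ : 0 < δ) : letI := fact_one_le_ofReal hp
    ∃ T : C(SobPair N (ENNReal.ofReal p), SobTriple N (ENNReal.ofReal p)),
      (∀ w, T (-w) = -T w) ∧ ∀ w ∈ W10 N p hp Ω,
        T w ∈ W10V N p hp Ω V ∧ ‖(T w).1 - w.1‖ < δ ∧ ‖(T w).2.1 - w.2‖ < δ := by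
  have := fact_one_le_ofReal hp
  obtain ⟨T, hodd, hT⟩ := exists_odd_continuous_mem_norm_map_sub_lt
    (forgetPotential N (ENNReal.ofReal p)) (testTriples p Ω V) hδ
  refine ⟨T, hodd, fun w hw => ?_⟩
  obtain ⟨hTD, hTw⟩ := hT w (W10_subset_closure_image_testTriples hp hV hV0 hw)
  exact ⟨subset_closure hTD, (norm_fst_le _).trans_lt hTw, (norm_snd_le _).trans_lt hTw⟩

lemma integral_abs_rpow_eq_one_iff {α : Type*} [MeasurableSpace α] {μ : Measure α} (hp : 0 < p)
    (f : Lp ℝ (ENNReal.ofReal p) μ) : ∫ x, |f x| ^ p ∂μ = 1 ↔ ‖f‖ = 1 := by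
  simp only [← Real.norm_eq_abs, integral_norm_rpow_eq_norm_Lp_rpow hp]
  simpa only [Real.one_rpow] using
    Real.rpow_left_inj (show 0 ≤ ‖f‖ from ENNReal.toReal_nonneg) zero_le_one hp.ne'

lemma image_normalize_mem_SobClassV (hp : 1 ≤ p) {k ℓ : ℕ} (hℓ : ℓ ≤ k)
    {K : Set (SobPair N (ENNReal.ofReal p))} (hK : K ∈ SobClass N p hp Ω k)
    {T : SobPair N (ENNReal.ofReal p) → SobTriple N (ENNReal.ofReal p)}
    (hT : letI := fact_one_le_ofReal hp; ContinuousOn T K) (hodd : ∀ w ∈ K, T (-w) = -T w)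
    (hTW : ∀ w ∈ K, T w ∈ W10V N p hp Ω V) (hT0 : ∀ w ∈ K, (T w).1 ≠ 0) :
    (fun w => ‖(T w).1‖⁻¹ • T w) '' K ∈ SobClassV N p hp Ω V ℓ := by
  have := fact_one_le_ofReal hp
  obtain ⟨-, -, hKneg, hKcompact, hKgenus⟩ := hK
  have hS : ContinuousOn (fun w => ‖(T w).1‖⁻¹ • T w) K :=
    (hT.fst.norm.inv₀ fun w hw => norm_ne_zero_iff.2 (hT0 w hw)).smul hT
  have hSodd : ∀ w ∈ K, ‖(T (-w)).1‖⁻¹ • T (-w) = -(‖(T w).1‖⁻¹ • T w) := fun w hw => by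
    rw [hodd w hw, Prod.fst_neg, norm_neg, smul_neg]
  refine ⟨?_, ?_, ?_, hKcompact.image_of_continuousOn hS,
    fun j hj => hℓ.trans (hKgenus.image hS hSodd j hj)⟩
  · rintro _ ⟨w, hw, rfl⟩
    exact smul_mem_W10V hp (hTW w hw) _
  · rintro _ ⟨w, hw, rfl⟩
    exact (integral_abs_rpow_eq_one_iff (by linarith) _).2 (norm_smul_inv_norm (𝕜 := ℝ) (hT0 w hw))
  · rintro _ ⟨w, hw, rfl⟩
    exact ⟨-w, hKneg w hw, hSodd w hw⟩

lemma exists_mem_Ioo_add_div_one_sub_lt {a b : ℝ} (hab : a < b) :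
    ∃ δ ∈ Ioo (0 : ℝ) 1, (a + δ) / (1 - δ) < b := by
  have hcont : ContinuousAt (fun δ : ℝ => (a + δ) / (1 - δ)) 0 :=
    ContinuousAt.div (by fun_prop) (by fun_prop) (by norm_num)
  have hlt : ∀ᶠ δ in 𝓝[>] (0 : ℝ), (a + δ) / (1 - δ) < b :=
    (hcont.eventually_lt continuousAt_const (by simpa using hab)).filter_mono nhdsWithin_le_nhds
  exact ((eventually_mem_set.2 (Ioo_mem_nhdsGT one_pos)).and hlt).exists

-- The elements of `K` need not have finite potential energy, so `K` is first moved into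
-- `W^{1,p}_0(Ω; V)` by an odd map close to the identity.
lemma exists_mem_SobClassV_norm_le (hp : 1 ≤ p) (hV : LocallyIntegrable V) (hV0 : ∀ᵐ x, 0 ≤ V x)
    {k : ℕ} {K : Set (SobPair N (ENNReal.ofReal p))} (hK : K ∈ SobClass N p hp Ω k) {a b : ℝ}
    (ha : 0 ≤ a) (hab : a < b) (hKa : ∀ w ∈ K, ‖w.2‖ ≤ a) :
    ∃ B > 0, ∃ m ∈ Ico 0 b, ∀ ℓ ≤ k, ∃ K' ∈ SobClassV N p hp Ω V ℓ,
      ∀ w ∈ K', ‖w.2.1‖ ≤ m ∧ ‖w.2.2‖ ≤ B := by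
  have := fact_one_le_ofReal hp
  obtain ⟨δ, ⟨hδ0, hδ1⟩, hδb⟩ := exists_mem_Ioo_add_div_one_sub_lt hab
  obtain ⟨T, hodd, hT⟩ := exists_odd_continuous_W10_to_W10V (Ω := Ω) hp hV hV0 hδ0
  have hT₁ : ∀ w ∈ K, 1 - δ ≤ ‖(T w).1‖ := fun w hw => by
    have hw₁ : ‖w.1‖ = 1 := (integral_abs_rpow_eq_one_iff (by linarith) _).1 (hK.2.1 w hw)
    have htri := norm_sub_norm_le w.1 (T w).1
    rw [norm_sub_rev, hw₁] at htri
    linarith [(hT w (hK.1 hw)).2.1]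
  have hT₂ : ∀ w ∈ K, ‖(T w).2.1‖ ≤ a + δ := fun w hw => by
    linarith [norm_sub_norm_le (T w).2.1 w.2, (hT w (hK.1 hw)).2.2, hKa w hw]
  have hmem := fun ℓ (hℓ : ℓ ≤ k) => image_normalize_mem_SobClassV hp hℓ hK
    T.continuous.continuousOn (fun w _ => hodd w) (fun w hw => (hT w (hK.1 hw)).1)
    fun w hw => norm_pos_iff.1 (by linarith [hT₁ w hw])
  obtain ⟨B, hB0, hB⟩ := (hmem k le_rfl).2.2.2.1.isBounded.exists_pos_norm_le
  have hpos : 0 < 1 - δ := by linarith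
  refine ⟨B, hB0, (a + δ) / (1 - δ), ⟨by positivity, hδb⟩, fun ℓ hℓ => ⟨_, hmem ℓ hℓ, fun v hv =>
    ⟨?_, (norm_snd_le v.2).trans ((norm_snd_le v).trans (hB v hv))⟩⟩⟩
  obtain ⟨w, hw, rfl⟩ := hv
  calc ‖‖(T w).1‖⁻¹ • (T w).2.1‖ = ‖(T w).2.1‖ / ‖(T w).1‖ := by
        rw [norm_smul, norm_inv, norm_norm, inv_mul_eq_div]
    _ ≤ (a + δ) / (1 - δ) :=
        div_le_div₀ ((norm_nonneg _).trans (hT₂ w hw)) (hT₂ w hw) hpos (hT₁ w hw)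

lemma exists_mem_SobClass_of_lambdaLS_lt (hp : 1 ≤ p) {k : ℕ} {Λ : ℝ} (hΛ : 0 ≤ Λ)
    (hlt : lambdaLS N p hp Ω k < ENNReal.ofReal (Λ ^ p)) :
    letI := fact_one_le_ofReal hp
    ∃ K ∈ SobClass N p hp Ω k, ∃ a ∈ Ico 0 Λ, ∀ w ∈ K, ‖w.2‖ ≤ a := by
  have := fact_one_le_ofReal hp
  have hp0 : 0 < p := by linarith
  obtain ⟨t, ht, htΛ⟩ := ENNReal.lt_iff_exists_nnreal_btwn.1 hlt
  obtain ⟨K, hK⟩ := iInf_lt_iff.1 ht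
  obtain ⟨hKmem, hK⟩ := iInf_lt_iff.1 hK
  have htΛ : (t : ℝ) < Λ ^ p := (ENNReal.lt_ofReal_iff_toReal_lt coe_ne_top).1 htΛ
  refine ⟨K, hKmem, (t : ℝ) ^ p⁻¹, ⟨by positivity, (Real.rpow_inv_lt_iff_of_pos t.2 hΛ hp0).2 htΛ⟩,
    fun w hw => (Real.le_rpow_inv_iff_of_pos (norm_nonneg _) t.2 hp0).2 ?_⟩
  rw [← integral_norm_rpow_eq_norm_Lp_rpow hp0]
  have hle := (le_iSup₂ (f := fun v (_ : v ∈ K) => ENNReal.ofReal (∫ x, ‖v.2 x‖ ^ p)) w hw).trans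
    hK.le
  exact (ENNReal.ofReal_le_iff_le_toReal coe_ne_top).1 hle

lemma exists_lambdaLSV_le (hp : 1 ≤ p) (hV : LocallyIntegrable V) (hV0 : ∀ᵐ x, 0 ≤ V x) {k : ℕ}
    {Λ : ℝ} (hΛ : 0 ≤ Λ) (hlt : lambdaLS N p hp Ω k < ENNReal.ofReal Λ) :
    ∃ ε₀ > 0, ∀ ε, 0 ≤ ε → ε ≤ ε₀ → ∀ ℓ ≤ k,
      lambdaLSV N p hp Ω V ε ℓ ≤ ENNReal.ofReal Λ := by
  have := fact_one_le_ofReal hp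
  have hp0 : 0 < p := by linarith
  obtain ⟨b, hb, rfl⟩ : ∃ b : ℝ, 0 ≤ b ∧ b ^ p = Λ :=
    ⟨Λ ^ p⁻¹, by positivity, Real.rpow_inv_rpow hΛ hp0.ne'⟩
  obtain ⟨K, hK, a, ⟨ha, hab⟩, hKa⟩ := exists_mem_SobClass_of_lambdaLS_lt hp hb hlt
  obtain ⟨B, hB, m, ⟨hm, hmb⟩, hK'⟩ := exists_mem_SobClassV_norm_le hp hV hV0 hK ha hab hKa
  have hgap : 0 < b ^ p - m ^ p := sub_pos.2 (Real.rpow_lt_rpow hm hmb hp0)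
  refine ⟨(b ^ p - m ^ p) / B ^ p, by positivity, fun ε hε hεle ℓ hℓ => ?_⟩
  obtain ⟨K', hK'mem, hbound⟩ := hK' ℓ hℓ
  refine (iInf₂_le K' hK'mem).trans (iSup₂_le fun w hw => ENNReal.ofReal_le_ofReal ?_)
  obtain ⟨hgrad, hpot⟩ := hbound w hw
  simp only [← Real.norm_eq_abs, integral_norm_rpow_eq_norm_Lp_rpow hp0]
  calc ‖w.2.1‖ ^ p + ε * ‖w.2.2‖ ^ p ≤ m ^ p + ε * B ^ p := by gcongr
    _ ≤ b ^ p := by linarith [(le_div_iff₀ (by positivity)).1 hεle]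

end MinMax

section ExponentialDecay

lemma le_exp_log_mul_of_add_one_le {F : ℝ → ℝ} {θ s : ℝ} (hθ : θ ∈ Ioo (0 : ℝ) 1)
    (hF1 : ∀ r, F r ≤ 1) (hF : ∀ r > s, F (r + 1) ≤ θ * F r) (r : ℝ) :
    F r ≤ Real.exp (Real.log θ * (r - s - 1)) := by
  have hlog : Real.log θ < 0 := Real.log_neg hθ.1 hθ.2
  obtain hr | hr := le_or_gt r s
  · exact (hF1 r).trans (Real.one_le_exp (mul_nonneg_of_nonpos_of_nonpos hlog.le (by linarith)))
  have hiter (n : ℕ) : ∀ t > s, F (t + n) ≤ θ ^ n := by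
    induction n with
    | zero => simpa using fun t _ => hF1 t
    | succ n ih =>
      intro t ht
      rw [Nat.cast_add_one, ← add_assoc, pow_succ']
      exact (hF _ (by linarith [n.cast_nonneg (α := ℝ)])).trans
        (mul_le_mul_of_nonneg_left (ih t ht) hθ.1.le)
  obtain ⟨n, hn⟩ := Nat.exists_eq_add_one.2 (Nat.ceil_pos.2 (sub_pos.2 hr))
  have hn_lt : (n : ℝ) < r - s := Nat.lt_ceil.1 (by omega)
  have hle_n : r - s ≤ n + 1 := mod_cast hn ▸ Nat.le_ceil (r - s)
  calc F r = F (r - n + n) := by rw [sub_add_cancel]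
    _ ≤ θ ^ n := hiter n _ (by linarith)
    _ = Real.exp (Real.log θ * n) := by rw [mul_comm, Real.exp_nat_mul, Real.exp_log hθ.1]
    _ ≤ Real.exp (Real.log θ * (r - s - 1)) :=
        Real.exp_le_exp.2 (mul_le_mul_of_nonpos_left (by linarith) hlog.le)

variable {N : ℕ} {p : ℝ} {Ω : Set (EucN N)} {V : EucN N → ℝ}

lemma exists_setIntegral_bracketExterior_le_exp (hp : 1 < p) (hV : LocallyIntegrable V)
    (hV0 : ∀ᵐ x, 0 ≤ V x) {Λ L R : ℝ} (hΛ : 0 ≤ Λ) (hL : Λ < L)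
    (hR : ENNReal.ofReal L ≤ lambda1p N p hp.le (Ω \ closure (ball (0 : EucN N) R))) :
    ∃ C > 0, ∃ α > 0, ∀ {u : EucN N → ℝ} {g : EucN N → EucN N},
      IsSignedSubsolution hp.le Ω V Λ u g → ∫ x, |u x| ^ p ≤ 1 →
      ∀ r, ∫ x in bracketExterior (EucN N) r, |u x| ^ p ≤ C * Real.exp (-α * r) := by
  obtain ⟨θ, hθ, htail⟩ :=
    exists_setIntegral_bracketExterior_add_one_le (N := N) (Ω := Ω) hp hV hV0 hΛ hL
  refine ⟨Real.exp (-Real.log θ * (2 + R)), Real.exp_pos _, -Real.log θ,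
    neg_pos.2 (Real.log_neg hθ.1 hθ.2), fun {u g} hu hu1 r => ?_⟩
  have hmass (t : ℝ) : ∫ x in bracketExterior (EucN N) t, |u x| ^ p ≤ 1 :=
    (setIntegral_le_integral hu.1.integrable_rpow (.of_forall fun x => by positivity)).trans hu1
  refine (le_exp_log_mul_of_add_one_le hθ hmass (fun t ht => htail hu hR ht) r).trans_eq ?_
  rw [← Real.exp_add]
  ring_nf

lemma exists_ae_abs_le_exp (hp : 1 < p) (hV : LocallyIntegrable V) (hV0 : ∀ᵐ x, 0 ≤ V x)
    {Λ L R : ℝ} (hΛ : 0 ≤ Λ) (hL : Λ < L)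
    (hR : ENNReal.ofReal L ≤ lambda1p N p hp.le (Ω \ closure (ball (0 : EucN N) R))) :
    ∃ C > 0, ∃ α > 0, ∀ {u : EucN N → ℝ} {g : EucN N → EucN N},
      IsSignedSubsolution hp.le Ω V Λ u g → ∫ x, |u x| ^ p ≤ 1 →
      ∀ᵐ x, |u x| ≤ C * Real.exp (-α * ‖x‖) := by
  have hp0 : 0 < p := by linarith
  obtain ⟨A, hA, β, hβ, htail⟩ := exists_setIntegral_bracketExterior_le_exp hp hV hV0 hΛ hL hR
  obtain ⟨H, hH, hbdd⟩ :=
    exists_ae_abs_le_of_setIntegral_bracketExterior_le (N := N) (Ω := Ω) hp hV hV0 hΛ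
  set B := (H * A + 1) ^ (1 / p)
  have hB : 0 < B := by positivity
  have hBp : H * A ≤ B ^ p := by
    rw [← Real.rpow_mul (by positivity), one_div_mul_cancel hp0.ne', Real.rpow_one]
    linarith
  refine ⟨B * Real.exp (β / p * 2), by positivity, β / p, by positivity, fun {u g} hu hu1 => ?_⟩
  have hexterior (j : ℕ) : ∀ᵐ x, x ∈ bracketExterior (EucN N) ((j - 1 : ℝ) + 1) →
      |u x| ≤ B * Real.exp (-(β / p) * (j - 1)) := by
    refine hbdd hu (by positivity) ?_
    calc H * ∫ x in bracketExterior (EucN N) (j - 1 : ℝ), |u x| ^ p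
        ≤ H * (A * Real.exp (-β * (j - 1))) := by gcongr; exact htail hu hu1 _
      _ = (H * A) * Real.exp (-β * (j - 1)) := by ring
      _ ≤ B ^ p * Real.exp (-β * (j - 1)) := by gcongr
      _ = (B * Real.exp (-(β / p) * (j - 1))) ^ p := by
        rw [Real.mul_rpow hB.le (Real.exp_pos _).le, ← Real.exp_mul]
        congr 2
        field_simp
  filter_upwards [ae_all_iff.2 hexterior] with x hx
  obtain ⟨j, hj⟩ := Nat.exists_eq_add_one.2 (Nat.ceil_pos.2 (japaneseBracket_pos x))
  have hj_lt : (j : ℝ) < japaneseBracket x := Nat.lt_ceil.1 (by omega)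
  have hnorm_le : ‖x‖ ≤ j + 1 :=
    (norm_le_japaneseBracket x).trans (mod_cast hj ▸ Nat.le_ceil (japaneseBracket x))
  calc |u x| ≤ B * Real.exp (-(β / p) * (j - 1)) := hx j (by rwa [sub_add_cancel])
    _ ≤ B * Real.exp (β / p * 2 + -(β / p) * ‖x‖) := by
        gcongr
        nlinarith [div_pos hβ hp0]
    _ = B * Real.exp (β / p * 2) * Real.exp (-(β / p) * ‖x‖) := by rw [Real.exp_add, mul_assoc]

lemma exists_lambda1p_diff_closure_ball_gt (hp : 1 ≤ p) {t : ℝ≥0∞} (ht : t < Einfty N p hp Ω) :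
    ∃ R : ℝ, t < lambda1p N p hp (Ω \ closure (ball (0 : EucN N) R)) := by
  simp only [Einfty, lt_iSup_iff] at ht
  obtain ⟨R, -, hR⟩ := ht
  exact ⟨R, hR⟩

end ExponentialDecay

theorem statement15_general (N : ℕ) {p : ℝ} (hp : 1 < p) {Ω : Set (EucN N)} {k : ℕ}
    (hlt : lambdaLS N p hp.le Ω k < Einfty N p hp.le Ω) {V : EucN N → ℝ}
    (hV : LocallyIntegrable V volume) (hV0 : ∀ᵐ x, 0 ≤ V x) :
    ∃ ε₀ > (0 : ℝ), ∃ C > (0 : ℝ), ∃ α > (0 : ℝ), ∀ ε, 0 ≤ ε → ε ≤ ε₀ → ∀ ℓ ≤ k,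
      ∀ w, IsCriticalV N p hp.le Ω V ε (lambdaLSV N p hp.le Ω V ε ℓ).toReal w →
        ∀ᵐ x, |w.1 x| ≤ C * Real.exp (-α * ‖x‖) := by
  obtain ⟨L, hltL, hLE⟩ := ENNReal.lt_iff_exists_nnreal_btwn.1 hlt
  obtain ⟨Λ, hltΛ, hΛL⟩ := ENNReal.lt_iff_exists_nnreal_btwn.1 hltL
  obtain ⟨R, hR⟩ := exists_lambda1p_diff_closure_ball_gt hp.le hLE
  rw [← ENNReal.ofReal_coe_nnreal] at hltΛ hR
  obtain ⟨ε₀, hε₀, hlevel⟩ := exists_lambdaLSV_le hp.le hV hV0 Λ.2 hltΛ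
  obtain ⟨C, hC, α, hα, hdecay⟩ :=
    exists_ae_abs_le_exp hp hV hV0 Λ.2 (NNReal.coe_lt_coe.2 (coe_lt_coe.1 hΛL)) hR.le
  refine ⟨ε₀, hε₀, C, hC, α, hα, fun ε hε hεle ℓ hℓ w hw => ?_⟩
  have hΛ := ENNReal.toReal_le_of_le_ofReal Λ.2 (hlevel ε hε hεle ℓ hℓ)
  exact hdecay (hw.isSignedSubsolution hp hV.aestronglyMeasurable hV0 hε hΛ) hw.2.1.le

theorem statement15 (N : ℕ) (p : ℝ) (hp1 : 1 < p) (Ω : Set (EucN N)) (hΩ : IsOpen Ω)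
    (hE : Einfty N p hp1.le Ω ≠ ⊤)
    (k : ℕ) (hk : k ≠ 0) (hlt : lambdaLS N p hp1.le Ω k < Einfty N p hp1.le Ω)
    (V : EucN N → ℝ) (hV : StronglyConfining N V)
    (ε : ℕ → ℝ) (hεpos : ∀ n, 0 < ε n) (hεdec : Antitone ε) (hεlim : Tendsto ε atTop (𝓝 0))
    (u : ℕ → ℕ → SobTriple N (ENNReal.ofReal p))
    (hu : ∀ ℓ n, 1 ≤ ℓ → ℓ ≤ k →
      IsCriticalV N p hp1.le Ω V (ε n) ((lambdaLSV N p hp1.le Ω V (ε n) ℓ).toReal) (u ℓ n)) :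
    ∀ ℓ, 1 ≤ ℓ → ℓ ≤ k → ∃ n₀ : ℕ, ∃ C > (0 : ℝ), ∃ α > (0 : ℝ), ∀ n ≥ n₀,
      ∀ᵐ x, x ∈ Ω → |(u ℓ n).1 x| ≤ C * Real.exp (-α * ‖x‖) := by
  intro ℓ hℓ1 hℓk
  obtain ⟨ε₀, hε₀, C, hC, α, hα, hdecay⟩ := statement15_general N hp1 hlt hV.1 hV.2.1
  obtain ⟨n₀, hn₀⟩ := eventually_atTop.1 (hεlim.eventually_le_const hε₀)
  exact ⟨n₀, C, hC, α, hα, fun n hn => (hdecay (ε n) (hεpos n).le (hn₀ n hn) ℓ hℓk (u ℓ n)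
    (hu ℓ n hℓ1 hℓk)).mono fun x hx _ => hx⟩

end
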